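/- arXiv:dg-ga/9608003 — 9 statements merged into one kernel-verified Lean document; each statement's English description precedes it below -/
import Mathlib

section
/- Let A : EuclideanSpace ℝ (Fin m) →L[ℝ] EuclideanSpace ℂ (Fin n) be a real-linear map, where EuclideanSpace ℂ (Fin n) is regarded as a real inner product space with ⟪v,w⟫_ℝ = Re ⟪v,w⟫, and let A† denote its real adjoint. Then the following are equivalent: (i) A ∘ A† commutes with multiplication by i, i.e. (A ∘ A†)(i • w) = i • (A ∘ A†)(w) for all w; (ii) for all α, β ∈ Fin n, ∑_{i ∈ Fin m} (A (e i)) α * (A (e i)) β = 0, where (e i) is the standard orthonormal basis of EuclideanSpace ℝ (Fin m); (iii) the ℂ-linear span in (Fin m → ℂ) of the vectors v^α := (i ↦ (A (e i)) α), α ∈ Fin n, is isotropic for the standard complex bilinear form B(u,w) = ∑_{i} u i * w i. -/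
/-!
Write `a i = A (e i)` and `S α β = ∑ i, a i α * a i β`. The adjoint satisfies
`(A† w) i = Re ⟪a i, w⟫`, and expanding `2 * Re z = z + conj z` splits `A A† w` into a part that is
complex linear in `w` and the conjugate-linear part `(1/2) ∑ β, S α β * conj (w β)`. The commutator
with multiplication by `I` therefore sees only the latter part (`commutator_apply`), and it vanishes
for all `w` iff `S = 0`. Isotropy of the span is `S = 0` extended by bilinearity.
-/

open scoped InnerProductSpace
open Module

noncomputable def stdBasis (m : ℕ) (i : Fin m) : EuclideanSpace ℝ (Fin m) :=
  EuclideanSpace.single i (1 : ℝ)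

lemma adjoint_apply_coord (m n : ℕ)
    (A : EuclideanSpace ℝ (Fin m) →L[ℝ] EuclideanSpace ℂ (Fin n))
    (w : EuclideanSpace ℂ (Fin n)) (i : Fin m) :
    (ContinuousLinearMap.adjoint A w) i
      = ∑ β, (w β * starRingEnd ℂ (A (stdBasis m i) β)).re := by
  have h := ContinuousLinearMap.adjoint_inner_right A (stdBasis m i) w
  rw [stdBasis, EuclideanSpace.inner_single_left, PiLp.inner_apply] at h
  simpa [stdBasis, Complex.inner] using h

lemma map_eq_sum_stdBasis (m n : ℕ)
    (A : EuclideanSpace ℝ (Fin m) →L[ℝ] EuclideanSpace ℂ (Fin n))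
    (x : EuclideanSpace ℝ (Fin m)) (α : Fin n) :
    A x α = ∑ i, (x i : ℂ) * A (stdBasis m i) α := by
  have hx : x = ∑ i, x i • stdBasis m i := by
    ext j
    simp [stdBasis, Pi.single_apply]
  conv_lhs => rw [hx]
  simp

/-- The commutator of `A A†` with multiplication by `I` only sees the conjugate-linear part of
`A A†`, whose matrix is half of `∑ i, A (e i) α * A (e i) β`. -/
lemma commutator_apply (m n : ℕ)
    (A : EuclideanSpace ℝ (Fin m) →L[ℝ] EuclideanSpace ℂ (Fin n))
    (w : EuclideanSpace ℂ (Fin n)) (α : Fin n) :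
    A (ContinuousLinearMap.adjoint A (Complex.I • w)) α
        - Complex.I * A (ContinuousLinearMap.adjoint A w) α
      = -Complex.I * ∑ β, starRingEnd ℂ (w β) *
          ∑ i, A (stdBasis m i) α * A (stdBasis m i) β := by
  rw [map_eq_sum_stdBasis, map_eq_sum_stdBasis]
  simp_rw [adjoint_apply_coord, Complex.ofReal_sum, Finset.mul_sum, Finset.sum_mul,
    Finset.mul_sum]
  rw [← Finset.sum_sub_distrib]
  conv_rhs => rw [Finset.sum_comm]
  refine Finset.sum_congr rfl fun i _ => ?_
  rw [← Finset.sum_sub_distrib]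
  refine Finset.sum_congr rfl fun β _ => ?_
  simp only [Complex.re_eq_add_conj, PiLp.smul_apply, smul_eq_mul, map_mul, Complex.conj_conj,
    Complex.conj_I]
  ring

theorem stmt0 (m n : ℕ) (A : EuclideanSpace ℝ (Fin m) →L[ℝ] EuclideanSpace ℂ (Fin n)) :
    ((∀ w : EuclideanSpace ℂ (Fin n),
        A (ContinuousLinearMap.adjoint A (Complex.I • w)) =
          Complex.I • A (ContinuousLinearMap.adjoint A w)) ↔
      (∀ α β : Fin n, ∑ i : Fin m, (A (stdBasis m i)) α * (A (stdBasis m i)) β = 0)) ∧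
    ((∀ α β : Fin n, ∑ i : Fin m, (A (stdBasis m i)) α * (A (stdBasis m i)) β = 0) ↔
      (∀ v ∈ Submodule.span ℂ
          (Set.range fun α : Fin n => fun i : Fin m => (A (stdBasis m i)) α),
        ∀ w ∈ Submodule.span ℂ
          (Set.range fun α : Fin n => fun i : Fin m => (A (stdBasis m i)) α),
        ∑ i : Fin m, v i * w i = 0)) := by
  refine ⟨⟨fun h α β => ?_, fun h w => ?_⟩, fun h v hv w hw => ?_, fun h α β => ?_⟩
  · have hc := commutator_apply m n A (EuclideanSpace.single β 1) α
    rw [h] at hc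
    simpa [Pi.single_apply, apply_ite (starRingEnd ℂ)] using hc
  · ext α
    have hc := commutator_apply m n A w α
    simp only [h, mul_zero, Finset.sum_const_zero] at hc
    simpa using sub_eq_zero.mp hc
  · induction hv, hw using Submodule.span_induction₂ with
    | mem_mem x y hx hy =>
      obtain ⟨α, rfl⟩ := hx
      obtain ⟨β, rfl⟩ := hy
      exact h α β
    | zero_left y hy => simp
    | zero_right x hx => simp
    | add_left x y z hx hy hz h₁ h₂ => simp [add_mul, Finset.sum_add_distrib, h₁, h₂]
    | add_right x y z hx hy hz h₁ h₂ => simp [mul_add, Finset.sum_add_distrib, h₁, h₂]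
    | smul_left r x y hx hy h₁ => simp [mul_assoc, ← Finset.mul_sum, h₁]
    | smul_right r x y hx hy h₁ => simp [mul_left_comm, ← Finset.mul_sum, h₁]
  · exact h _ (Submodule.subset_span ⟨α, rfl⟩) _ (Submodule.subset_span ⟨β, rfl⟩)
end

section
/- Let φ : EuclideanSpace ℝ (Fin m) → EuclideanSpace ℂ (Fin n) be differentiable. Then φ is pseudo horizontally weakly conformal at every point if and only if for every p, every open set U ⊆ EuclideanSpace ℂ (Fin n), and every map ψ : EuclideanSpace ℂ (Fin n) → EuclideanSpace ℂ (Fin p) that is ±holomorphic on U, the composition ψ ∘ φ is pseudo horizontally weakly conformal at every point of φ⁻¹(U). -/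
/-!
PHWC of `φ` at `x` says that the vectors `v i = dφₓ(e i)` satisfy `∑ i, v i α * v i β = 0`, i.e. that
the symmetric `ℂ`-bilinear tensor `∑ i, v i ⊗ v i` vanishes. A `ℂ`-linear map carries a vanishing
tensor to a vanishing tensor, so by the chain rule composing with a holomorphic map preserves
PHWC; so does componentwise conjugation, which merely conjugates the equations. An
antiholomorphic map is the conjugate of a holomorphic one. The converse is the case `ψ = id`.
-/

open scoped InnerProductSpace
open Module

/-- Pseudo horizontal weak conformality at a point. -/
def PHWCAt {m n : ℕ} (φ : EuclideanSpace ℝ (Fin m) → EuclideanSpace ℂ (Fin n))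
    (x : EuclideanSpace ℝ (Fin m)) : Prop :=
  ∀ α β : Fin n,
    ∑ i : Fin m, (fderiv ℝ φ x (stdBasis m i)) α * (fderiv ℝ φ x (stdBasis m i)) β = 0

/-- A map between complex Euclidean spaces is ±holomorphic on `U` if it or its componentwise
complex conjugate is holomorphic on `U`. -/
def PMHolomorphicOn {n p : ℕ} (ψ : EuclideanSpace ℂ (Fin n) → EuclideanSpace ℂ (Fin p))
    (U : Set (EuclideanSpace ℂ (Fin n))) : Prop :=
  DifferentiableOn ℂ ψ U ∨
    DifferentiableOn ℂ
      (fun z => (WithLp.equiv 2 (Fin p → ℂ)).symm fun a => starRingEnd ℂ (ψ z a)) U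

/-- The complex-bilinear isotropy relations are preserved by complex linear maps. -/
lemma sum_mul_map_eq_zero {m n p : ℕ} (v : Fin m → EuclideanSpace ℂ (Fin n))
    (hv : ∀ α β, ∑ i, v i α * v i β = 0)
    (L : EuclideanSpace ℂ (Fin n) →L[ℂ] EuclideanSpace ℂ (Fin p)) (a b : Fin p) :
    ∑ i, L (v i) a * L (v i) b = 0 := by
  have key : ∀ (w : EuclideanSpace ℂ (Fin n)) (c : Fin p),
      L w c = ∑ α, w α * L (EuclideanSpace.single α 1) c := by
    intro w c
    have hw : w = ∑ α, w α • EuclideanSpace.single α (1 : ℂ) := by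
      ext j
      simp [Pi.single_apply]
    conv_lhs => rw [hw]
    simp
  rw [Finset.sum_congr rfl fun i _ => by rw [key (v i) a, key (v i) b, Finset.sum_mul_sum],
    Finset.sum_comm]
  refine Finset.sum_eq_zero fun α _ => ?_
  rw [Finset.sum_comm]
  refine Finset.sum_eq_zero fun β _ => ?_
  rw [← zero_mul (L (EuclideanSpace.single α 1) a * L (EuclideanSpace.single β 1) b), ← hv α β,
    Finset.sum_mul]
  exact Finset.sum_congr rfl fun i _ => by ring

lemma PHWCAt.comp_holomorphic {m n p : ℕ}
    {φ : EuclideanSpace ℝ (Fin m) → EuclideanSpace ℂ (Fin n)} {x : EuclideanSpace ℝ (Fin m)}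
    (h : PHWCAt φ x) (hφ : DifferentiableAt ℝ φ x)
    {ψ : EuclideanSpace ℂ (Fin n) → EuclideanSpace ℂ (Fin p)}
    (hψ : DifferentiableAt ℂ ψ (φ x)) : PHWCAt (ψ ∘ φ) x := by
  intro a b
  rw [((hψ.hasFDerivAt.restrictScalars ℝ).comp x hφ.hasFDerivAt).fderiv]
  exact sum_mul_map_eq_zero (fun i => fderiv ℝ φ x (stdBasis m i)) h (fderiv ℂ ψ (φ x)) a b

/-- Componentwise complex conjugation, as a real continuous linear map. -/
noncomputable def conjCLM (p : ℕ) : EuclideanSpace ℂ (Fin p) →L[ℝ] EuclideanSpace ℂ (Fin p) :=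
  LinearMap.toContinuousLinearMap
    { toFun := fun z => (WithLp.equiv 2 (Fin p → ℂ)).symm fun a => starRingEnd ℂ (z a)
      map_add' := fun z w => by ext a; simp
      map_smul' := fun c z => by ext a; simp }

lemma conjCLM_apply {p : ℕ} (z : EuclideanSpace ℂ (Fin p)) (a : Fin p) :
    conjCLM p z a = starRingEnd ℂ (z a) := rfl

lemma PHWCAt.conj {m p : ℕ} {φ : EuclideanSpace ℝ (Fin m) → EuclideanSpace ℂ (Fin p)}
    {x : EuclideanSpace ℝ (Fin m)} (h : PHWCAt φ x) (hφ : DifferentiableAt ℝ φ x) :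
    PHWCAt (conjCLM p ∘ φ) x := by
  intro a b
  rw [((conjCLM p).hasFDerivAt.comp x hφ.hasFDerivAt).fderiv]
  simp only [ContinuousLinearMap.comp_apply, conjCLM_apply, ← map_mul, ← map_sum, h a b, map_zero]

theorem stmt3 (m n : ℕ) (φ : EuclideanSpace ℝ (Fin m) → EuclideanSpace ℂ (Fin n))
    (hφ : Differentiable ℝ φ) :
    (∀ x, PHWCAt φ x) ↔
      ∀ (p : ℕ) (U : Set (EuclideanSpace ℂ (Fin n)))
        (ψ : EuclideanSpace ℂ (Fin n) → EuclideanSpace ℂ (Fin p)),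
        IsOpen U → PMHolomorphicOn ψ U →
        ∀ x ∈ φ ⁻¹' U, PHWCAt (ψ ∘ φ) x := by
  constructor
  · rintro h p U ψ hU (hψ | hψ) x hx
    · exact (h x).comp_holomorphic (hφ x) (hψ.differentiableAt (hU.mem_nhds hx))
    · have hd := hψ.differentiableAt (hU.mem_nhds hx)
      have hc := ((h x).comp_holomorphic (hφ x) hd).conj
        ((hd.restrictScalars ℝ).comp x (hφ x))
      -- Conjugation is an involution, so conjugating `conj ψ ∘ φ` returns `ψ ∘ φ`.
      convert hc using 1
      funext y
      ext a
      simp [conjCLM_apply]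
  · intro h x
    exact h n Set.univ id isOpen_univ (Or.inl differentiableOn_id) x (Set.mem_univ _)
end

section
/- Let φ : EuclideanSpace ℝ (Fin m) → EuclideanSpace ℂ (Fin n) be C² on the whole space, harmonic, and pseudo horizontally weakly conformal at every point. Then for every open set U ⊆ EuclideanSpace ℂ (Fin n) and every function f : EuclideanSpace ℂ (Fin n) → ℂ that is ±holomorphic on U, the composition f ∘ φ is harmonic on the open set φ⁻¹(U). -/
/-!
The chain rule gives, for `f` holomorphic near `φ x`,
`Δ(f ∘ φ)(x) = ∑ i, f''(φ x)(∂ᵢφ, ∂ᵢφ) + f'(φ x)(Δφ(x))`.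
The last term vanishes because `φ` is harmonic. As `f''(φ x)` is complex bilinear, the first term
equals `∑ α β, f''(φ x)(e_α, e_β) ∑ i, ∂ᵢφ^α ∂ᵢφ^β`, which vanishes by pseudo horizontal weak
conformality. An antiholomorphic `f` reduces to its conjugate, conjugation being real linear.

The analytic input is that a holomorphic function of several variables has a complex
differentiable derivative (`differentiableAt_fderiv_of_holomorphic`). Each directional derivative
is a Cauchy integral over a circle in that direction, and one differentiates under the integral
sign, the Schwarz lemma supplying a local bound for `f'`.
-/

open scoped InnerProductSpace
open Module

/-- A map into a real normed space is harmonic on `S` if its Laplacian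
(the trace of its second derivative over the standard orthonormal basis) vanishes on `S`. -/
def HarmonicOn {m : ℕ} {E : Type*} [NormedAddCommGroup E] [NormedSpace ℝ E]
    (ψ : EuclideanSpace ℝ (Fin m) → E) (S : Set (EuclideanSpace ℝ (Fin m))) : Prop :=
  ∀ x ∈ S, ∑ i : Fin m, iteratedFDeriv ℝ 2 ψ x ![stdBasis m i, stdBasis m i] = 0

/-- A ℂ-valued function is ±holomorphic on `U` if it or its complex conjugate is
holomorphic on `U`. -/
def PMHolomorphicFnOn {n : ℕ} (f : EuclideanSpace ℂ (Fin n) → ℂ)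
    (U : Set (EuclideanSpace ℂ (Fin n))) : Prop :=
  DifferentiableOn ℂ f U ∨ DifferentiableOn ℂ (fun z => starRingEnd ℂ (f z)) U

open Metric Complex

/-- Directional derivatives of a holomorphic function of several variables are complex
differentiable, by differentiation under the integral sign in the Cauchy formula
`f'(z) v = (2πi)⁻¹ ∮ ζ⁻² f(z + ζ v) dζ`. -/
lemma differentiableAt_fderiv_apply_of_holomorphic {n : ℕ} {f : EuclideanSpace ℂ (Fin n) → ℂ}
    {U : Set (EuclideanSpace ℂ (Fin n))} (hU : IsOpen U) (hf : DifferentiableOn ℂ f U)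
    {z₀ : EuclideanSpace ℂ (Fin n)} (hz₀ : z₀ ∈ U) (v : EuclideanSpace ℂ (Fin n)) :
    DifferentiableAt ℂ (fun z => fderiv ℂ f z v) z₀ := by
  obtain ⟨R, hR, hRU, hRf⟩ : ∃ R > 0, ball z₀ R ⊆ U ∧ ∀ z ∈ ball z₀ R, f z ∈ ball (f z₀) 1 := by
    have h := Filter.inter_mem (hU.mem_nhds hz₀)
      ((hf.differentiableAt (hU.mem_nhds hz₀)).continuousAt (ball_mem_nhds (f z₀) one_pos))
    obtain ⟨R, hR, h⟩ := Metric.mem_nhds_iff.1 h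
    exact ⟨R, hR, fun z hz => (h hz).1, fun z hz => (h hz).2⟩
  have hdiff : ∀ z ∈ ball z₀ R, DifferentiableAt ℂ f z := fun z hz =>
    hf.differentiableAt (hU.mem_nhds (hRU hz))
  have hbound : ∀ z ∈ ball z₀ (R / 2), ‖fderiv ℂ f z‖ ≤ 2 / (R / 2) := by
    intro z hz
    have hsub : ball z (R / 2) ⊆ ball z₀ R := ball_subset_ball' (by
      have := mem_ball.1 hz
      linarith)
    apply norm_fderiv_le_div_of_mapsTo_ball (hf.mono (hsub.trans hRU)) _ (half_pos hR)
    intro w hw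
    have h1 := mem_ball.1 (hRf w (hsub hw))
    have h2 := mem_ball'.1 (hRf z (hsub (mem_ball_self (half_pos hR))))
    have := dist_triangle (f w) (f z₀) (f z)
    apply mem_closedBall.2
    linarith
  obtain ⟨ρ, hρ, hρv⟩ : ∃ ρ > 0, ρ * ‖v‖ < R / 4 := by
    refine ⟨R / 4 / (‖v‖ + 1), by positivity, ?_⟩
    rw [div_mul_eq_mul_div, div_lt_iff₀ (by positivity)]
    nlinarith [norm_nonneg v]
  have hmem : ∀ z ∈ ball z₀ (R / 4), ∀ ζ ∈ closedBall (0 : ℂ) ρ,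
      z + ζ • v ∈ ball z₀ (R / 2) := by
    intro z hz ζ hζ
    rw [mem_ball_iff_norm] at hz ⊢
    rw [mem_closedBall_zero_iff] at hζ
    have h1 : ‖ζ • v‖ ≤ ρ * ‖v‖ := by
      rw [norm_smul]; gcongr
    calc ‖z + ζ • v - z₀‖ = ‖(z - z₀) + ζ • v‖ := by congr 1; abel
      _ ≤ ‖z - z₀‖ + ‖ζ • v‖ := norm_add_le _ _
      _ < R / 2 := by linarith
  have hhalf : ball z₀ (R / 2) ⊆ ball z₀ R := ball_subset_ball (by linarith)
  have hcauchy : ∀ z ∈ ball z₀ (R / 4), fderiv ℂ f z v =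
      (2 * Real.pi * I : ℂ)⁻¹ • ∮ ζ in C(0, ρ), ((ζ - 0) ^ 2)⁻¹ • f (z + ζ • v) := by
    intro z hz
    have hlin : ∀ ζ : ℂ, HasDerivAt (fun ζ : ℂ => z + ζ • v) v ζ := fun ζ => by
      simpa using ((hasDerivAt_id ζ).smul_const v).const_add z
    rw [two_pi_I_inv_smul_circleIntegral_sub_sq_inv_smul_of_differentiable
      (U := (fun ζ : ℂ => z + ζ • v) ⁻¹' ball z₀ (R / 2)) (f := fun ζ => f (z + ζ • v))
      (isOpen_ball.preimage (by fun_prop)) (fun ζ hζ => hmem z hz ζ hζ)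
      (fun ζ hζ => ?_) (mem_ball_self hρ)]
    · have hz' : DifferentiableAt ℂ f (z + (0 : ℂ) • v) :=
        hdiff _ (hhalf (hmem z hz 0 (mem_closedBall_self hρ.le)))
      have := (hz'.hasFDerivAt.comp_hasDerivAt (0 : ℂ) (hlin 0)).deriv
      simp only [Function.comp_def] at this
      rw [this]
      simp
    · exact ((hdiff _ (hhalf hζ)).comp ζ (hlin ζ).differentiableAt).differentiableWithinAt
  have hcircle : ∀ t : ℝ, circleMap 0 ρ t ∈ closedBall (0 : ℂ) ρ := fun t =>
    circleMap_mem_closedBall 0 hρ.le t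
  let c : ℝ → ℂ := fun t => deriv (circleMap 0 ρ) t * ((circleMap 0 ρ t - 0) ^ 2)⁻¹
  have hc : Continuous c := by
    have hne : ∀ t, (circleMap 0 ρ t - 0) ^ 2 ≠ 0 := fun t => by
      simp [circleMap_eq_center_iff, hρ.ne']
    have hd : Continuous (deriv (circleMap 0 ρ)) := by
      simp only [funext (deriv_circleMap 0 ρ)]
      fun_prop
    exact hd.mul (Continuous.inv₀ (by fun_prop) hne)
  have hcont : ∀ z ∈ ball z₀ (R / 4),
      Continuous fun t : ℝ => c t • f (z + circleMap 0 ρ t • v) := by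
    intro z hz
    refine hc.smul (continuous_iff_continuousAt.2 fun t => ?_)
    have h1 := (hdiff _ (hhalf (hmem z hz _ (hcircle t)))).continuousAt
    exact ContinuousAt.comp (f := fun t : ℝ => z + circleMap 0 ρ t • v) h1
      (by fun_prop)
  have hball : ball z₀ (R / 4) ∈ nhds z₀ := ball_mem_nhds z₀ (by positivity)
  have hint : HasFDerivAt
      (fun z => ∫ t in (0 : ℝ)..2 * Real.pi, c t • f (z + circleMap 0 ρ t • v))
      (∫ t in (0 : ℝ)..2 * Real.pi, c t • fderiv ℂ f (z₀ + circleMap 0 ρ t • v)) z₀ := by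
    apply intervalIntegral.hasFDerivAt_integral_of_dominated_of_fderiv_le hball
      (F := fun z t => c t • f (z + circleMap 0 ρ t • v))
      (F' := fun z t => c t • fderiv ℂ f (z + circleMap 0 ρ t • v))
      (bound := fun t => ‖c t‖ * (2 / (R / 2)))
    · filter_upwards [hball] with z hz
      exact (hcont z hz).aestronglyMeasurable
    · exact (hcont z₀ (mem_of_mem_nhds hball)).intervalIntegrable _ _
    · have : ProperSpace (EuclideanSpace ℂ (Fin n) →L[ℂ] ℂ) := FiniteDimensional.proper ℂ _
      have hm : Measurable fun t : ℝ => fderiv ℂ f (z₀ + circleMap 0 ρ t • v) :=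
        (measurable_fderiv ℂ f).comp (Continuous.measurable (by fun_prop))
      exact hc.aestronglyMeasurable.smul hm.stronglyMeasurable.aestronglyMeasurable
    · refine Filter.Eventually.of_forall fun t _ z hz => ?_
      rw [norm_smul]
      gcongr
      exact hbound _ (hmem z hz _ (hcircle t))
    · exact (hc.norm.mul continuous_const).intervalIntegrable _ _
    · refine Filter.Eventually.of_forall fun t _ z hz => ?_
      have h1 := (hdiff _ (hhalf (hmem z hz _ (hcircle t)))).hasFDerivAt
      exact ((hasFDerivAt_comp_add_right _).2 h1).const_smul (c t)
  refine (hint.differentiableAt.const_smul (2 * Real.pi * I : ℂ)⁻¹).congr_of_eventuallyEq ?_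
  filter_upwards [hball] with z hz
  rw [hcauchy z hz]
  simp only [circleIntegral, c, smul_smul, Pi.smul_apply]

lemma differentiableAt_fderiv_of_holomorphic {n : ℕ} {f : EuclideanSpace ℂ (Fin n) → ℂ}
    {U : Set (EuclideanSpace ℂ (Fin n))} (hU : IsOpen U) (hf : DifferentiableOn ℂ f U)
    {z₀ : EuclideanSpace ℂ (Fin n)} (hz₀ : z₀ ∈ U) :
    DifferentiableAt ℂ (fderiv ℂ f) z₀ := by
  have h : fderiv ℂ f = fun z => ∑ α : Fin n,
      (fderiv ℂ f z (EuclideanSpace.single α 1)) • EuclideanSpace.proj (𝕜 := ℂ) α := by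
    ext z w
    conv_lhs => rw [← (EuclideanSpace.basisFun (Fin n) ℂ).sum_repr w]
    simp [mul_comm]
  rw [h]
  exact DifferentiableAt.fun_sum fun α _ =>
    (differentiableAt_fderiv_apply_of_holomorphic hU hf hz₀ _).smul_const _

/-- A complex bilinear form has vanishing trace on a family of vectors satisfying the
conformality relations. -/
lemma sum_bilin_eq_zero {m n : ℕ}
    (B : EuclideanSpace ℂ (Fin n) →L[ℂ] EuclideanSpace ℂ (Fin n) →L[ℂ] ℂ)
    (w : Fin m → EuclideanSpace ℂ (Fin n))
    (hw : ∀ α β : Fin n, ∑ i, w i α * w i β = 0) : ∑ i, B (w i) (w i) = 0 := by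
  have h : ∀ i, B (w i) (w i) = ∑ α, ∑ β, w i α * w i β *
      B (EuclideanSpace.single α 1) (EuclideanSpace.single β 1) := by
    intro i
    conv_lhs => rw [← (EuclideanSpace.basisFun (Fin n) ℂ).sum_repr (w i)]
    simp only [map_sum, map_smul, sum_apply, smul_apply,
      EuclideanSpace.basisFun_repr, EuclideanSpace.basisFun_apply, smul_eq_mul, Finset.mul_sum]
    rw [Finset.sum_comm]
    exact Finset.sum_congr rfl fun α _ => Finset.sum_congr rfl fun β _ => by ring
  simp_rw [h]
  rw [Finset.sum_comm]
  refine Finset.sum_eq_zero fun α _ => ?_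
  rw [Finset.sum_comm]
  refine Finset.sum_eq_zero fun β _ => ?_
  rw [← Finset.sum_mul, hw, zero_mul]

/-- The chain rule for second derivatives, for a holomorphic outer function. -/
lemma iteratedFDeriv_two_comp_holomorphic {m n : ℕ}
    {φ : EuclideanSpace ℝ (Fin m) → EuclideanSpace ℂ (Fin n)} (hC2 : ContDiff ℝ 2 φ)
    {U : Set (EuclideanSpace ℂ (Fin n))} (hU : IsOpen U)
    {f : EuclideanSpace ℂ (Fin n) → ℂ} (hf : DifferentiableOn ℂ f U)
    {x : EuclideanSpace ℝ (Fin m)} (hx : φ x ∈ U) (u v : EuclideanSpace ℝ (Fin m)) :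
    iteratedFDeriv ℝ 2 (f ∘ φ) x ![u, v] =
      fderiv ℂ (fderiv ℂ f) (φ x) (fderiv ℝ φ x u) (fderiv ℝ φ x v) +
        fderiv ℂ f (φ x) (iteratedFDeriv ℝ 2 φ x ![u, v]) := by
  have hφ : Differentiable ℝ φ := hC2.differentiable (by norm_num)
  have hφ' : Differentiable ℝ (fderiv ℝ φ) :=
    (hC2.fderiv_right (m := 1) (by norm_num)).differentiable (by norm_num)
  have hfirst : fderiv ℝ (f ∘ φ) =ᶠ[nhds x] fun y =>
      ((fderiv ℂ f (φ y)).restrictScalars ℝ).comp (fderiv ℝ φ y) := by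
    filter_upwards [(hU.preimage hφ.continuous).mem_nhds hx] with y hy
    exact (((hf.differentiableAt (hU.mem_nhds hy)).hasFDerivAt.restrictScalars ℝ).comp y
      (hφ y).hasFDerivAt).fderiv
  have h2 : HasFDerivAt (fun y => (fderiv ℂ f (φ y)).restrictScalars ℝ)
      ((ContinuousLinearMap.restrictScalarsL ℂ (EuclideanSpace ℂ (Fin n)) ℂ ℝ ℝ).comp
        (((fderiv ℂ (fderiv ℂ f) (φ x)).restrictScalars ℝ).comp (fderiv ℝ φ x))) x :=
    (ContinuousLinearMap.restrictScalarsL ℂ (EuclideanSpace ℂ (Fin n)) ℂ ℝ ℝ).hasFDerivAt.comp x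
      (((differentiableAt_fderiv_of_holomorphic hU hf hx).hasFDerivAt.restrictScalars ℝ).comp x
        (hφ x).hasFDerivAt)
  have h3 := h2.clm_comp (hφ' x).hasFDerivAt
  rw [iteratedFDeriv_two_apply, iteratedFDeriv_two_apply, hfirst.fderiv_eq, h3.fderiv]
  simp [add_comm]

lemma harmonicOn_comp_holomorphic {m n : ℕ}
    {φ : EuclideanSpace ℝ (Fin m) → EuclideanSpace ℂ (Fin n)}
    (hC2 : ContDiff ℝ 2 φ) (hharm : HarmonicOn φ Set.univ) (hphwc : ∀ x, PHWCAt φ x)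
    {U : Set (EuclideanSpace ℂ (Fin n))} (hU : IsOpen U)
    {f : EuclideanSpace ℂ (Fin n) → ℂ} (hf : DifferentiableOn ℂ f U) :
    HarmonicOn (f ∘ φ) (φ ⁻¹' U) := by
  intro x hx
  simp_rw [iteratedFDeriv_two_comp_holomorphic hC2 hU hf hx]
  rw [Finset.sum_add_distrib, sum_bilin_eq_zero _ _ (hphwc x), ← map_sum,
    hharm x (Set.mem_univ x), map_zero, add_zero]

theorem stmt4 (m n : ℕ) (φ : EuclideanSpace ℝ (Fin m) → EuclideanSpace ℂ (Fin n))
    (hC2 : ContDiff ℝ 2 φ) (hharm : HarmonicOn φ Set.univ) (hphwc : ∀ x, PHWCAt φ x)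
    (U : Set (EuclideanSpace ℂ (Fin n))) (hU : IsOpen U)
    (f : EuclideanSpace ℂ (Fin n) → ℂ) (hf : PMHolomorphicFnOn f U) :
    HarmonicOn (f ∘ φ) (φ ⁻¹' U) := by
  rcases hf with hf | hf
  · exact harmonicOn_comp_holomorphic hC2 hharm hphwc hU hf
  · intro x hx
    have h := harmonicOn_comp_holomorphic hC2 hharm hphwc hU hf x hx
    have hconj : (fun z => starRingEnd ℂ (f z)) ∘ φ = conjCLE ∘ (f ∘ φ) := by
      ext y
      simp
    simp_rw [hconj, ContinuousLinearEquiv.iteratedFDeriv_comp_left,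
      ContinuousLinearMap.compContinuousMultilinearMap_coe] at h
    simp only [Function.comp_apply, ContinuousLinearEquiv.coe_coe, ← map_sum] at h
    exact (map_eq_zero_iff conjCLE conjCLE.injective).1 h
end

section
/- Let φ : EuclideanSpace ℝ (Fin m) → EuclideanSpace ℂ (Fin n) be C² on the whole space, and suppose that for every open set U ⊆ EuclideanSpace ℂ (Fin n) and every function f : EuclideanSpace ℂ (Fin n) → ℂ that is ±holomorphic on U, the composition f ∘ φ is harmonic on φ⁻¹(U). Then φ is harmonic and pseudo horizontally weakly conformal at every point, i.e. φ is a pseudo harmonic morphism. -/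
/-! The coordinate functions `z_α` and their products `z_α z_β` are holomorphic on all of `ℂⁿ`, and
testing the hypothesis on them is enough. Harmonicity of every `z_α ∘ φ` is harmonicity of `φ`.
Given that, the Leibniz rule `Δ(gh) = g Δh + h Δg + 2 ∑ᵢ (∂ᵢg)(∂ᵢh)`
(`iteratedFDeriv_two_mul_diag`) for `g = φ_α`, `h = φ_β` leaves only the cross term, whose
vanishing is pseudo horizontal weak conformality. -/

open scoped InnerProductSpace
open Module

theorem iteratedFDeriv_two_mul_diag {E : Type*} [NormedAddCommGroup E] [NormedSpace ℝ E]
    {g h : E → ℂ} (hg : ContDiff ℝ 2 g) (hh : ContDiff ℝ 2 h) (x v : E) :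
    iteratedFDeriv ℝ 2 (fun y => g y * h y) x ![v, v] =
      g x * iteratedFDeriv ℝ 2 h x ![v, v] + h x * iteratedFDeriv ℝ 2 g x ![v, v] +
        2 * (fderiv ℝ g x v * fderiv ℝ h x v) := by
  have dg : Differentiable ℝ g := hg.differentiable (by norm_num)
  have dh : Differentiable ℝ h := hh.differentiable (by norm_num)
  have dg' : Differentiable ℝ (fderiv ℝ g) :=
    (hg.fderiv_right (m := 1) (by norm_num)).differentiable (by norm_num)
  have dh' : Differentiable ℝ (fderiv ℝ h) :=
    (hh.fderiv_right (m := 1) (by norm_num)).differentiable (by norm_num)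
  have key : fderiv ℝ (fun y => g y * h y) = fun y => g y • fderiv ℝ h y + h y • fderiv ℝ g y := by
    funext y
    exact fderiv_fun_mul (dg y) (dh y)
  simp only [iteratedFDeriv_two_apply, key]
  rw [fderiv_fun_add ((dg x).fun_smul (dh' x)) ((dh x).fun_smul (dg' x)),
    fderiv_fun_smul (dg x) (dh' x), fderiv_fun_smul (dh x) (dg' x)]
  simp
  ring

theorem stmt5 (m n : ℕ) (φ : EuclideanSpace ℝ (Fin m) → EuclideanSpace ℂ (Fin n))
    (hC2 : ContDiff ℝ 2 φ)
    (hpull : ∀ (U : Set (EuclideanSpace ℂ (Fin n))), IsOpen U →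
      ∀ f : EuclideanSpace ℂ (Fin n) → ℂ, PMHolomorphicFnOn f U →
        HarmonicOn (f ∘ φ) (φ ⁻¹' U)) :
    HarmonicOn φ Set.univ ∧ ∀ x, PHWCAt φ x := by
  let P : Fin n → EuclideanSpace ℂ (Fin n) →L[ℝ] ℂ := fun α =>
    (EuclideanSpace.proj (𝕜 := ℂ) α).restrictScalars ℝ
  have hP : ∀ α z, P α z = z α := fun _ _ => rfl
  have hcoord : ∀ α : Fin n, Differentiable ℂ (fun z : EuclideanSpace ℂ (Fin n) => z α) :=
    fun α => (EuclideanSpace.proj (𝕜 := ℂ) α).differentiable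
  have hPC2 : ∀ α, ContDiff ℝ 2 (P α ∘ φ) := fun α => (P α).contDiff.comp hC2
  have hlin : ∀ α x, ∑ i : Fin m,
      iteratedFDeriv ℝ 2 (P α ∘ φ) x ![stdBasis m i, stdBasis m i] = 0 := fun α x =>
    hpull Set.univ isOpen_univ (P α) (Or.inl (hcoord α).differentiableOn) x (Set.mem_univ _)
  have hfd : ∀ α x v, fderiv ℝ (P α ∘ φ) x v = (fderiv ℝ φ x v) α := by
    intro α x v
    rw [fderiv_comp x (P α).differentiableAt (hC2.differentiable (by norm_num) x), (P α).fderiv]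
    rfl
  refine ⟨fun x _ => ?_, fun x α β => ?_⟩
  · ext α
    rw [← hP, map_sum, PiLp.zero_apply, ← hlin α x]
    refine Finset.sum_congr rfl fun i _ => ?_
    rw [(P α).iteratedFDeriv_comp_left hC2.contDiffAt le_rfl]
    rfl
  · have hprod : ∑ i : Fin m, iteratedFDeriv ℝ 2 (fun y => (P α ∘ φ) y * (P β ∘ φ) y) x
        ![stdBasis m i, stdBasis m i] = 0 :=
      hpull Set.univ isOpen_univ (fun z => z α * z β)
        (Or.inl ((hcoord α).mul (hcoord β)).differentiableOn) x (Set.mem_univ _)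
    simp only [iteratedFDeriv_two_mul_diag (hPC2 α) (hPC2 β), Finset.sum_add_distrib,
      ← Finset.mul_sum, hlin, mul_zero, zero_add, hfd] at hprod
    exact (mul_eq_zero.mp hprod).resolve_left two_ne_zero
end

section
/- Let φ : EuclideanSpace ℝ (Fin m) → EuclideanSpace ℂ (Fin n) be a pseudo harmonic morphism (C², harmonic, and pseudo horizontally weakly conformal at every point). Then for every open set U ⊆ EuclideanSpace ℂ (Fin n) and every pluriharmonic function f : EuclideanSpace ℂ (Fin n) → ℝ on U, the composition f ∘ φ is harmonic on φ⁻¹(U). -/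
/-!
By the second-order chain rule, `Δ(f ∘ φ)(x)` is `df(Δφ)` plus the trace
`∑ i, B (dφ eᵢ, dφ eᵢ)`, where `B` is the real Hessian of `f` at `φ x`. The first term vanishes
because `φ` is harmonic. Pluriharmonicity says `B (b, b) + B (I b, I b) = 0` for all `b`;
polarizing, `B` is the real part of a complex bilinear form, so `B (w, w)` is a real-linear
expression in the products `w α * w β` (`hessian_smul_smul`). Summed over `w = dφ eᵢ`, these
products cancel by pseudo horizontal weak conformality (`sum_hessian_eq_zero`).
-/

open scoped InnerProductSpace
open Module

/-- A map from `ℂ` (identified with `ℝ²` via the basis `1, I`) into a real normed space is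
harmonic on `T` if its Laplacian vanishes on `T`. -/
def HarmonicOnLine {E : Type*} [NormedAddCommGroup E] [NormedSpace ℝ E]
    (g : ℂ → E) (T : Set ℂ) : Prop :=
  ∀ z ∈ T,
    iteratedFDeriv ℝ 2 g z ![(1 : ℂ), (1 : ℂ)] +
      iteratedFDeriv ℝ 2 g z ![Complex.I, Complex.I] = 0

/-- A map, C² on the open set `U`, is pluriharmonic on `U` if its restriction to every
complex line (hence to every holomorphic curve) is harmonic. -/
def PluriharmonicOn {n : ℕ} {E : Type*} [NormedAddCommGroup E] [NormedSpace ℝ E]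
    (f : EuclideanSpace ℂ (Fin n) → E) (U : Set (EuclideanSpace ℂ (Fin n))) : Prop :=
  ContDiffOn ℝ 2 f U ∧
    ∀ a b : EuclideanSpace ℂ (Fin n),
      HarmonicOnLine (fun z : ℂ => f (a + z • b)) {z : ℂ | a + z • b ∈ U}

/-- Second-order chain rule, evaluated on the diagonal. -/
lemma iteratedFDeriv_two_comp_diag {E F G : Type*} [NormedAddCommGroup E] [NormedSpace ℝ E]
    [NormedAddCommGroup F] [NormedSpace ℝ F] [NormedAddCommGroup G] [NormedSpace ℝ G]
    {f : F → G} {φ : E → F} {x : E} (hf : ContDiffAt ℝ 2 f (φ x)) (hφ : ContDiff ℝ 2 φ) (v : E) :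
    iteratedFDeriv ℝ 2 (f ∘ φ) x ![v, v] =
      fderiv ℝ (fderiv ℝ f) (φ x) (fderiv ℝ φ x v) (fderiv ℝ φ x v) +
        fderiv ℝ f (φ x) (iteratedFDeriv ℝ 2 φ x ![v, v]) := by
  have hφ1 : Differentiable ℝ φ := hφ.differentiable (by norm_num)
  have hfderiv : fderiv ℝ (f ∘ φ) =ᶠ[nhds x] fun y => (fderiv ℝ f (φ y)).comp (fderiv ℝ φ y) := by
    have hev := hφ.continuous.continuousAt.eventually (hf.eventually (by simp))
    filter_upwards [hev] with y hy
    exact fderiv_comp y (hy.differentiableAt (by norm_num)) (hφ1 y)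
  have hdf : DifferentiableAt ℝ (fderiv ℝ f) (φ x) :=
    (hf.fderiv_right (m := 1) (by norm_num)).differentiableAt (by norm_num)
  have hdφ : DifferentiableAt ℝ (fderiv ℝ φ) x :=
    (hφ.contDiffAt.fderiv_right (m := 1) (by norm_num)).differentiableAt (by norm_num)
  have hcomp : HasFDerivAt (fun y => fderiv ℝ f (φ y))
      ((fderiv ℝ (fderiv ℝ f) (φ x)).comp (fderiv ℝ φ x)) x :=
    hdf.hasFDerivAt.comp x (hφ1 x).hasFDerivAt
  rw [iteratedFDeriv_two_apply, iteratedFDeriv_two_apply, hfderiv.fderiv_eq,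
    (hcomp.clm_comp hdφ.hasFDerivAt).fderiv]
  simp [add_comm]

/-- The Hessian of a pluriharmonic function changes sign on the diagonal under `b ↦ I • b`. -/
lemma PluriharmonicOn.hessian_diag {n : ℕ} {U : Set (EuclideanSpace ℂ (Fin n))} (hU : IsOpen U)
    {f : EuclideanSpace ℂ (Fin n) → ℝ} (hf : PluriharmonicOn f U)
    {y : EuclideanSpace ℂ (Fin n)} (hy : y ∈ U) (b : EuclideanSpace ℂ (Fin n)) :
    fderiv ℝ (fderiv ℝ f) y b b +
      fderiv ℝ (fderiv ℝ f) y (Complex.I • b) (Complex.I • b) = 0 := by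
  have hline := hf.2 y b 0 (by simpa using hy)
  set l : ℂ →L[ℝ] EuclideanSpace ℂ (Fin n) :=
    (ContinuousLinearMap.toSpanSingleton ℂ b).restrictScalars ℝ
  have hψ : ContDiff ℝ 2 (fun z : ℂ => y + l z) := contDiff_const.add l.contDiff
  have hD : fderiv ℝ (fun z : ℂ => y + l z) = fun _ => l := by
    funext z
    rw [fderiv_const_add]
    exact l.fderiv
  have hfy : ContDiffAt ℝ 2 f (y + l 0) := by
    simpa using hf.1.contDiffAt (hU.mem_nhds hy)
  have hchain (v : ℂ) := iteratedFDeriv_two_comp_diag (x := (0 : ℂ)) hfy hψ v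
  -- the parametrization of the line is affine, so only the Hessian of `f` survives
  simp only [iteratedFDeriv_two_apply (fun z : ℂ => y + l z), hD] at hchain
  change iteratedFDeriv ℝ 2 (f ∘ fun z : ℂ => y + l z) 0 _ +
    iteratedFDeriv ℝ 2 (f ∘ fun z : ℂ => y + l z) 0 _ = 0 at hline
  rw [hchain, hchain] at hline
  simpa [l] using hline

/-- A symmetric real bilinear form with `B (b, b) + B (I b, I b) = 0` is the real part of a
complex bilinear form. -/
lemma hessian_smul_smul {V : Type*} [NormedAddCommGroup V] [NormedSpace ℂ V]
    (B : V →L[ℝ] V →L[ℝ] ℝ) (hsymm : ∀ u v, B u v = B v u)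
    (hB : ∀ b, B b b + B (Complex.I • b) (Complex.I • b) = 0) (c d : ℂ) (u v : V) :
    B (c • u) (d • v) = (c * d).re * B u v + (c * d).im * B (Complex.I • u) v := by
  have hII (u v : V) : B (Complex.I • u) (Complex.I • v) = -B u v := by
    have h := hB (u + v)
    simp only [smul_add, map_add, add_apply] at h
    linarith [hB u, hB v, hsymm u v, hsymm (Complex.I • u) (Complex.I • v)]
  have hI : B u (Complex.I • v) = B (Complex.I • u) v := by
    have h := hII (Complex.I • u) v
    rw [smul_smul, Complex.I_mul_I, neg_one_smul] at h
    simpa using h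
  have hsplit (c : ℂ) (w : V) : c • w = c.re • w + c.im • (Complex.I • w) := by
    conv_lhs => rw [← Complex.re_add_im c, add_smul, mul_smul]
    simp
  rw [hsplit c u, hsplit d v]
  simp only [map_add, map_smul, add_apply, smul_apply,
    smul_eq_mul, hII, hI, Complex.mul_re, Complex.mul_im]
  ring

lemma sum_hessian_eq_zero {m n : ℕ}
    (B : EuclideanSpace ℂ (Fin n) →L[ℝ] EuclideanSpace ℂ (Fin n) →L[ℝ] ℝ)
    (hsymm : ∀ u v, B u v = B v u)
    (hB : ∀ b, B b b + B (Complex.I • b) (Complex.I • b) = 0)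
    (w : Fin m → EuclideanSpace ℂ (Fin n))
    (hw : ∀ α β, ∑ i, w i α * w i β = 0) : ∑ i, B (w i) (w i) = 0 := by
  set e : Fin n → EuclideanSpace ℂ (Fin n) := fun α => EuclideanSpace.single α 1
  have hexp (w : EuclideanSpace ℂ (Fin n)) : w = ∑ α, w α • e α := by
    simpa [e] using ((EuclideanSpace.basisFun (Fin n) ℂ).sum_repr w).symm
  have hdiag (w : EuclideanSpace ℂ (Fin n)) : B w w = ∑ α, ∑ β,
      ((w α * w β).re * B (e α) (e β) + (w α * w β).im * B (Complex.I • e α) (e β)) := by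
    conv_lhs => rw [hexp w]
    simp only [map_sum, sum_apply, hessian_smul_smul B hsymm hB]
    rw [Finset.sum_comm]
  simp only [hdiag]
  rw [Finset.sum_comm]
  refine Finset.sum_eq_zero fun α _ => ?_
  rw [Finset.sum_comm]
  refine Finset.sum_eq_zero fun β _ => ?_
  rw [Finset.sum_add_distrib, ← Finset.sum_mul, ← Finset.sum_mul, ← Complex.re_sum,
    ← Complex.im_sum, hw]
  simp

theorem stmt8 (m n : ℕ) (φ : EuclideanSpace ℝ (Fin m) → EuclideanSpace ℂ (Fin n))
    (hC2 : ContDiff ℝ 2 φ) (hharm : HarmonicOn φ Set.univ) (hphwc : ∀ x, PHWCAt φ x)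
    (U : Set (EuclideanSpace ℂ (Fin n))) (hU : IsOpen U)
    (f : EuclideanSpace ℂ (Fin n) → ℝ) (hf : PluriharmonicOn f U) :
    HarmonicOn (f ∘ φ) (φ ⁻¹' U) := by
  intro x hx
  have hfx : ContDiffAt ℝ 2 f (φ x) := hf.1.contDiffAt (hU.mem_nhds hx)
  have hsymm : IsSymmSndFDerivAt ℝ f (φ x) := hfx.isSymmSndFDerivAt (by simp)
  simp only [iteratedFDeriv_two_comp_diag hfx hC2]
  rw [Finset.sum_add_distrib, ← map_sum, hharm x (Set.mem_univ x), map_zero, add_zero]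
  exact sum_hessian_eq_zero _ (fun u v => hsymm.eq u v) (hf.hessian_diag hU hx) _ (hphwc x)
end

section
/- Let φ : EuclideanSpace ℝ (Fin m) → EuclideanSpace ℂ (Fin n) be C². Then φ is a pseudo harmonic morphism (harmonic and pseudo horizontally weakly conformal at every point) if and only if for every p, every open set U ⊆ EuclideanSpace ℂ (Fin n), and every pluriharmonic map F : EuclideanSpace ℂ (Fin n) → EuclideanSpace ℂ (Fin p) on U, the composition F ∘ φ is harmonic on φ⁻¹(U). -/
/-!
Everything follows from the second-order chain rule
`D²(F ∘ φ)(u, v) = D²F(Dφ u, Dφ v) + DF(D²φ(u, v))` (`fderiv_fderiv_comp`).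

Applied to complex lines it says that `F` is pluriharmonic exactly when the symmetric real bilinear
form `B = D²F(y)` satisfies `B(b, b) + B(I b, I b) = 0` for all `b`
(`iteratedFDeriv_line_add`). By polarization this means that `B` is complex-balanced,
`B(c u, v) = B(u, c v)` for `c : ℂ` (`balanced_of_diag`). Expanding `w i = Dφ (e i)` in
coordinates then gives `∑ i, B(w i, w i) = ∑ α β, B(e α, (∑ i, w i α * w i β) e β)`, which
vanishes when `φ` is PHWC; if `φ` is also harmonic, `Δ(F ∘ φ) = 0`.

Conversely, testing with `F = id` gives harmonicity of `φ`, and testing with the holomorphic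
quadratic map `y ↦ y α * y β` gives `2 ∑ i, w i α * w i β = 0`, which is PHWC.
-/

open scoped InnerProductSpace
open Module

section ChainRule

variable {E V W : Type*} [NormedAddCommGroup E] [NormedSpace ℝ E]
  [NormedAddCommGroup V] [NormedSpace ℝ V] [NormedAddCommGroup W] [NormedSpace ℝ W]

theorem differentiableAt_fderiv_of_contDiffAt {f : E → V} {x : E} (hf : ContDiffAt ℝ 2 f x) :
    DifferentiableAt ℝ (fderiv ℝ f) x :=
  (hf.fderiv_right (m := 1) (by norm_num)).differentiableAt (by norm_num)

/-- The chain rule for second derivatives. -/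
theorem fderiv_fderiv_comp {f : V → W} {g : E → V} {x : E}
    (hf : ContDiffAt ℝ 2 f (g x)) (hg : ContDiffAt ℝ 2 g x) (u v : E) :
    fderiv ℝ (fderiv ℝ (f ∘ g)) x u v =
      fderiv ℝ (fderiv ℝ f) (g x) (fderiv ℝ g x u) (fderiv ℝ g x v)
        + fderiv ℝ f (g x) (fderiv ℝ (fderiv ℝ g) x u v) := by
  have hf' := hf.eventually (by simp)
  have hg' := hg.eventually (by simp)
  have hev : fderiv ℝ (f ∘ g) =ᶠ[nhds x] fun y => (fderiv ℝ f (g y)).comp (fderiv ℝ g y) := by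
    filter_upwards [hg.continuousAt.eventually hf', hg'] with y hy1 hy2
    exact fderiv_comp y (hy1.differentiableAt (by norm_num)) (hy2.differentiableAt (by norm_num))
  have h1 : HasFDerivAt (fun y => fderiv ℝ f (g y))
      ((fderiv ℝ (fderiv ℝ f) (g x)).comp (fderiv ℝ g x)) x :=
    (differentiableAt_fderiv_of_contDiffAt hf).hasFDerivAt.comp x
      (hg.differentiableAt (by norm_num)).hasFDerivAt
  have h2 := h1.clm_comp (differentiableAt_fderiv_of_contDiffAt hg).hasFDerivAt
  rw [hev.fderiv_eq, h2.fderiv]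
  simp [add_comm]

/-- Second derivative of the quadratic map `y ↦ Q y y`. -/
theorem fderiv_fderiv_quadratic (Q : V →L[ℝ] V →L[ℝ] W) (y k h : V) :
    fderiv ℝ (fderiv ℝ fun y => Q y y) y k h = Q k h + Q h k := by
  have h1 : fderiv ℝ (fun y => Q y y) = fun y => (Q + Q.flip) y := by
    funext y
    have := (Q.hasFDerivAt (x := y)).clm_apply (hasFDerivAt_id y)
    rw [show (fun y => Q y y) = fun y => (Q y) (id y) from rfl, this.fderiv]
    ext h
    simp
  rw [h1]
  rw [(Q + Q.flip).hasFDerivAt.fderiv]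
  simp

end ChainRule

/-- The Laplacian of `f` restricted to the complex line `a + ℂ b`. -/
theorem iteratedFDeriv_line_add {n : ℕ} {W : Type*} [NormedAddCommGroup W] [NormedSpace ℝ W]
    {f : EuclideanSpace ℂ (Fin n) → W} (a b : EuclideanSpace ℂ (Fin n)) (z : ℂ)
    (hf : ContDiffAt ℝ 2 f (a + z • b)) :
    iteratedFDeriv ℝ 2 (fun z : ℂ => f (a + z • b)) z ![(1 : ℂ), (1 : ℂ)] +
      iteratedFDeriv ℝ 2 (fun z : ℂ => f (a + z • b)) z ![Complex.I, Complex.I] =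
    fderiv ℝ (fderiv ℝ f) (a + z • b) b b +
      fderiv ℝ (fderiv ℝ f) (a + z • b) (Complex.I • b) (Complex.I • b) := by
  set L : ℂ →L[ℝ] EuclideanSpace ℂ (Fin n) :=
    ((ContinuousLinearMap.id ℂ ℂ).smulRight b).restrictScalars ℝ with hL
  have hLa : ∀ c, L c = c • b := fun c => by simp [hL]
  have hd : fderiv ℝ (fun z : ℂ => a + z • b) = fun _ => L := by
    funext w
    have : HasFDerivAt (fun z : ℂ => a + z • b) L w := by
      simpa only [hLa] using (L.hasFDerivAt (x := w)).const_add a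
    exact this.fderiv
  have hg : ContDiffAt ℝ 2 (fun z : ℂ => a + z • b) z := by
    have := contDiffAt_const (c := a) |>.add (L.contDiff.contDiffAt (x := z) (n := 2))
    simpa only [hLa] using this
  have key := fderiv_fderiv_comp (g := fun z : ℂ => a + z • b) (x := z) hf hg
  have hcomp : (f ∘ fun z : ℂ => a + z • b) = fun z : ℂ => f (a + z • b) := rfl
  rw [hcomp] at key
  rw [hd] at key
  simp [iteratedFDeriv_two_apply, key, hLa]

/-- A symmetric real bilinear map on a complex space with `B(b, b) + B(I b, I b) = 0` lets complex
scalars pass from one argument to the other: it is the sum of a complex bilinear and a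
conjugate-bilinear map. -/
theorem balanced_of_diag {n : ℕ} {W : Type*} [NormedAddCommGroup W] [NormedSpace ℝ W]
    (B : EuclideanSpace ℂ (Fin n) →L[ℝ] EuclideanSpace ℂ (Fin n) →L[ℝ] W)
    (hsymm : ∀ u v, B u v = B v u)
    (hdiag : ∀ b, B b b + B (Complex.I • b) (Complex.I • b) = 0)
    (c : ℂ) (u v : EuclideanSpace ℂ (Fin n)) : B (c • u) v = B u (c • v) := by
  have pol : ∀ u v, B u v + B (Complex.I • u) (Complex.I • v) = 0 := by
    intro u v
    have h := hdiag (u + v)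
    simp only [smul_add, map_add, add_apply] at h
    rw [hsymm v u, hsymm (Complex.I • v) (Complex.I • u)] at h
    have h2 : (2 : ℝ) • (B u v + B (Complex.I • u) (Complex.I • v)) = 0 := by
      rw [← h, two_smul]
      have e1 := hdiag u
      have e2 := hdiag v
      rw [← sub_eq_zero]
      calc _ = -((B u u + B (Complex.I • u) (Complex.I • u)) +
                (B v v + B (Complex.I • v) (Complex.I • v))) := by abel
        _ = 0 := by rw [e1, e2]; simp
    exact (smul_eq_zero.mp h2).resolve_left two_ne_zero
  have hI : B (Complex.I • u) v = B u (Complex.I • v) := by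
    have h := pol u (Complex.I • v)
    rw [smul_smul, Complex.I_mul_I, neg_one_smul, map_neg, ← sub_eq_add_neg, sub_eq_zero] at h
    exact h.symm
  have dec : ∀ w : EuclideanSpace ℂ (Fin n), c • w = c.re • w + c.im • (Complex.I • w) := by
    intro w
    conv_lhs => rw [← Complex.re_add_im c]
    rw [add_smul, mul_smul, Complex.coe_smul, Complex.coe_smul]
  rw [dec u, dec v]
  simp only [map_add, map_smul, add_apply, smul_apply, hI]

/-- A balanced form has zero trace over any family `w` with `∑ i, w i α * w i β = 0`. -/
theorem sum_balanced_eq_zero {n m : ℕ} {W : Type*} [NormedAddCommGroup W] [NormedSpace ℝ W]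
    (B : EuclideanSpace ℂ (Fin n) →L[ℝ] EuclideanSpace ℂ (Fin n) →L[ℝ] W)
    (hB : ∀ (c : ℂ) u v, B (c • u) v = B u (c • v))
    (w : Fin m → EuclideanSpace ℂ (Fin n))
    (hw : ∀ α β, ∑ i, w i α * w i β = 0) : ∑ i, B (w i) (w i) = 0 := by
  have dec : ∀ v : EuclideanSpace ℂ (Fin n),
      v = ∑ α, v α • EuclideanSpace.single α (1 : ℂ) := by
    intro v
    ext β
    simp [Finset.sum_apply, Pi.single_apply]
  have hexp : ∀ i, B (w i) (w i) = ∑ α, ∑ β, B (EuclideanSpace.single α (1 : ℂ))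
      ((w i α * w i β) • EuclideanSpace.single β (1 : ℂ)) := by
    intro i
    conv_lhs => rw [dec (w i)]
    simp only [map_sum, sum_apply, hB, smul_smul]
    exact Finset.sum_comm
  simp only [hexp]
  rw [Finset.sum_comm]
  refine Finset.sum_eq_zero fun α _ => ?_
  rw [Finset.sum_comm]
  refine Finset.sum_eq_zero fun β _ => ?_
  rw [← map_sum, ← Finset.sum_smul, hw, zero_smul, map_zero]

/-- `(y, z) ↦ y α * z β`, as a real bilinear map with values in `ℂ¹`. -/
noncomputable def coordProd {n : ℕ} (α β : Fin n) :
    EuclideanSpace ℂ (Fin n) →L[ℝ] EuclideanSpace ℂ (Fin n) →L[ℝ] EuclideanSpace ℂ (Fin 1) :=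
  (ContinuousLinearMap.compL ℝ (EuclideanSpace ℂ (Fin n)) ℂ (EuclideanSpace ℂ (Fin 1))
    (((ContinuousLinearMap.id ℂ ℂ).smulRight
      (EuclideanSpace.single (0 : Fin 1) (1 : ℂ))).restrictScalars ℝ)).comp
  ((ContinuousLinearMap.mul ℝ ℂ).bilinearComp
    ((EuclideanSpace.proj α : EuclideanSpace ℂ (Fin n) →L[ℂ] ℂ).restrictScalars ℝ)
    ((EuclideanSpace.proj β : EuclideanSpace ℂ (Fin n) →L[ℂ] ℂ).restrictScalars ℝ))

theorem coordProd_apply {n : ℕ} (α β : Fin n) (y z : EuclideanSpace ℂ (Fin n)) :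
    coordProd α β y z = (y α * z β) • EuclideanSpace.single (0 : Fin 1) (1 : ℂ) := by
  simp [coordProd]

theorem contDiff_coordProd {n : ℕ} (α β : Fin n) :
    ContDiff ℝ 2 fun y => coordProd α β y y :=
  (coordProd α β).contDiff.clm_apply contDiff_id

theorem pluriharmonicOn_coordProd {n : ℕ} (α β : Fin n) :
    PluriharmonicOn (fun y => coordProd α β y y) Set.univ := by
  refine ⟨(contDiff_coordProd α β).contDiffOn, fun a b z _ => ?_⟩
  rw [iteratedFDeriv_line_add (f := fun y => coordProd α β y y) a b z
    (contDiff_coordProd α β).contDiffAt]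
  simp only [fderiv_fderiv_quadratic]
  simp only [coordProd_apply, ← add_smul]
  convert zero_smul ℂ _ using 2
  simp only [PiLp.smul_apply, smul_eq_mul]
  linear_combination (2 * b α * b β) * Complex.I_mul_I

theorem pluriharmonicOn_id {n : ℕ} :
    PluriharmonicOn (fun y : EuclideanSpace ℂ (Fin n) => y) Set.univ := by
  refine ⟨contDiff_id.contDiffOn, fun a b z _ => ?_⟩
  rw [iteratedFDeriv_line_add (f := fun y => y) a b z contDiff_id.contDiffAt]
  have : fderiv ℝ (fun y : EuclideanSpace ℂ (Fin n) => y) =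
      fun _ => ContinuousLinearMap.id ℝ _ := by
    funext y
    exact fderiv_fun_id
  simp [this]

theorem stmt10 (m n : ℕ) (φ : EuclideanSpace ℝ (Fin m) → EuclideanSpace ℂ (Fin n))
    (hC2 : ContDiff ℝ 2 φ) :
    (HarmonicOn φ Set.univ ∧ ∀ x, PHWCAt φ x) ↔
      ∀ (p : ℕ) (U : Set (EuclideanSpace ℂ (Fin n))), IsOpen U →
        ∀ F : EuclideanSpace ℂ (Fin n) → EuclideanSpace ℂ (Fin p),
          PluriharmonicOn F U → HarmonicOn (F ∘ φ) (φ ⁻¹' U) := by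
  constructor
  · rintro ⟨hharm, hphwc⟩ p U hU F ⟨hFC, hF⟩ x hx
    have hFx : ContDiffAt ℝ 2 F (φ x) := hFC.contDiffAt (hU.mem_nhds hx)
    have hsymm : ∀ u v, fderiv ℝ (fderiv ℝ F) (φ x) u v = fderiv ℝ (fderiv ℝ F) (φ x) v u :=
      fun u v => (hFx.isSymmSndFDerivAt (by simp)).eq u v
    have hdiag : ∀ b, fderiv ℝ (fderiv ℝ F) (φ x) b b +
        fderiv ℝ (fderiv ℝ F) (φ x) (Complex.I • b) (Complex.I • b) = 0 := by
      intro b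
      have h0 : φ x + (0 : ℂ) • b = φ x := by simp
      have h1 := hF (φ x) b 0 (by simpa using hx)
      rw [iteratedFDeriv_line_add (φ x) b 0 (by rwa [h0]), h0] at h1
      exact h1
    have hh := hharm x (Set.mem_univ x)
    simp only [iteratedFDeriv_two_apply, Matrix.cons_val_zero, Matrix.cons_val_one] at hh ⊢
    simp only [fderiv_fderiv_comp hFx hC2.contDiffAt, Finset.sum_add_distrib]
    rw [← map_sum, hh, map_zero, add_zero]
    exact sum_balanced_eq_zero _ (balanced_of_diag _ hsymm hdiag) _ (hphwc x)
  · intro H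
    have hharm : HarmonicOn φ Set.univ := by
      have h := H n Set.univ isOpen_univ (fun y => y) pluriharmonicOn_id
      rwa [show (fun y => y) ∘ φ = φ from rfl, Set.preimage_univ] at h
    refine ⟨hharm, fun x α β => ?_⟩
    have h := H 1 Set.univ isOpen_univ _ (pluriharmonicOn_coordProd α β) x (Set.mem_univ _)
    have hh := hharm x (Set.mem_univ x)
    simp only [iteratedFDeriv_two_apply, Matrix.cons_val_zero, Matrix.cons_val_one] at hh h
    have key := fderiv_fderiv_comp (f := fun y => coordProd α β y y) (g := φ) (x := x)
      (contDiff_coordProd α β).contDiffAt hC2.contDiffAt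
    simp only [key, Finset.sum_add_distrib] at h
    rw [← map_sum, hh, map_zero, add_zero] at h
    simp only [fderiv_fderiv_quadratic] at h
    simp only [coordProd_apply, ← add_smul, ← Finset.sum_smul] at h
    have h0 := congrArg (fun v : EuclideanSpace ℂ (Fin 1) => v 0) h
    simp [← two_mul, ← Finset.mul_sum] at h0
    exact h0
end

section
/- Fix m and k with 2*k ≤ m. The assignment F ↦ ker((F.map Complex.ofReal).mulVecLin - Complex.I • LinearMap.id) is a bijection from the set of matrices F : Matrix (Fin m) (Fin m) ℝ with Fᵀ = -F, F^3 + F = 0 and rank F = 2*k, onto the set of ℂ-subspaces W of (Fin m → ℂ) with dim_ℂ W = k that are isotropic for the standard complex bilinear form, i.e. ∑_{i ∈ Fin m} v i * w i = 0 for all v, w ∈ W. -/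
open Module Matrix

/-!
Write `C` for the complexification of `F`. If `F³ + F = 0`, then `P = -(C² + i C) / 2` is the
projection onto `ker (C - i)` along the other eigenspaces; it is Hermitian when `F` is
skew-symmetric, hence it is the orthogonal projection onto `ker (C - i)`, and `F` is recovered as
`-2 Im P`. This gives injectivity. Traces give the dimension: `tr C = 0`, so
`dim ker (C - i) = tr P = tr (-F²) / 2`, while `-F²` is a projection onto the range of `F`, so its
trace is the rank of `F`.

Conversely, let `P` be the orthogonal projection onto an isotropic `W`. Isotropy says `Pᵀ P = 0`,
and taking adjoints gives `P Pᵀ = 0`. Since `Pᵀ` is the conjugate of `P`, the matrix `i (P - Pᵀ)` is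
real; it is skew-symmetric, satisfies `C³ = -C`, and its `i`-eigenspace is `W`.
-/

/-- The dimension of the image of a projection matrix is its trace. -/
lemma trace_eq_finrank_of_proj {K : Type*} [Field K] {m : ℕ} (P : Matrix (Fin m) (Fin m) K)
    (W : Submodule K (Fin m → K)) (h1 : ∀ v, P *ᵥ v ∈ W) (h2 : ∀ v ∈ W, P *ᵥ v = v) :
    P.trace = (finrank K W : K) := by
  have hp : LinearMap.IsProj W (Matrix.toLin' P) := ⟨fun v => by simpa using h1 v,
    fun v hv => by simpa using h2 v hv⟩
  rw [← hp.trace, Matrix.trace_toLin'_eq]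

/-- Orthogonal projection onto a subspace of `ℂ^m`, as a Hermitian matrix. -/
lemma exists_hermitian_proj {m : ℕ} (W : Submodule ℂ (Fin m → ℂ)) :
    ∃ P : Matrix (Fin m) (Fin m) ℂ, Pᴴ = P ∧ (∀ v, P *ᵥ v ∈ W) ∧ ∀ v ∈ W, P *ᵥ v = v := by
  let e := WithLp.linearEquiv 2 ℂ (Fin m → ℂ)
  let W' : Submodule ℂ (EuclideanSpace ℂ (Fin m)) := W.comap e.toLinearMap
  let T : EuclideanSpace ℂ (Fin m) →ₗ[ℂ] EuclideanSpace ℂ (Fin m) := W'.starProjection.toLinearMap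
  let P := Matrix.toEuclideanLin.symm T
  have hPT : Matrix.toEuclideanLin P = T := LinearEquiv.apply_symm_apply _ _
  have hP (v : Fin m → ℂ) : P *ᵥ v = e (T (WithLp.toLp 2 v)) := by
    rw [← hPT]; rfl
  refine ⟨P, ?_, fun v => ?_, fun v hv => ?_⟩
  · refine Matrix.isSymmetric_toEuclideanLin_iff.1 ?_
    rw [hPT]
    exact Submodule.starProjection_isSymmetric W'
  · rw [hP]
    exact (Submodule.starProjection_apply_mem W' (WithLp.toLp 2 v) :)
  · rw [hP]
    have : T (WithLp.toLp 2 v) = WithLp.toLp 2 v :=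
      Submodule.starProjection_eq_self_iff.2 hv
    rw [this]; rfl

/-- A Hermitian projection matrix is determined by its range. -/
lemma hermitian_proj_unique {m : ℕ} {W : Submodule ℂ (Fin m → ℂ)} {P Q : Matrix (Fin m) (Fin m) ℂ}
    (hP : Pᴴ = P) (hP1 : ∀ v, P *ᵥ v ∈ W) (hP2 : ∀ v ∈ W, P *ᵥ v = v)
    (hQ : Qᴴ = Q) (hQ1 : ∀ v, Q *ᵥ v ∈ W) (hQ2 : ∀ v ∈ W, Q *ᵥ v = v) : P = Q := by
  have h1 : P * Q = Q := Matrix.ext_of_mulVec_single fun i => by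
    rw [← Matrix.mulVec_mulVec, hP2 _ (hQ1 _)]
  have h2 : Q * P = P := Matrix.ext_of_mulVec_single fun i => by
    rw [← Matrix.mulVec_mulVec, hQ2 _ (hP1 _)]
  have h3 := congrArg conjTranspose h1
  rw [conjTranspose_mul, hP, hQ, h2] at h3
  exact h3

lemma mem_ker_iff {m : ℕ} (C : Matrix (Fin m) (Fin m) ℂ) (v : Fin m → ℂ) :
    v ∈ LinearMap.ker (C.mulVecLin - Complex.I • LinearMap.id) ↔ C *ᵥ v = Complex.I • v := by
  simp [LinearMap.mem_ker, sub_eq_zero]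

/-- The polynomial `-(C² + i C) / 2` in `C`. When `C³ + C = 0` it is the projection onto
`ker (C - i)` along the eigenspaces for `0` and `-i`. -/
noncomputable def eigProj {m : ℕ} (C : Matrix (Fin m) (Fin m) ℂ) : Matrix (Fin m) (Fin m) ℂ :=
  (-1 / 2 : ℂ) • (C * C + Complex.I • C)

lemma eigProj_mem {m : ℕ} (C : Matrix (Fin m) (Fin m) ℂ) (hC : C ^ 3 + C = 0) (v : Fin m → ℂ) :
    eigProj C *ᵥ v ∈ LinearMap.ker (C.mulVecLin - Complex.I • LinearMap.id) := by
  have h3 : C * (C * C) = -C := by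
    rw [eq_neg_iff_add_eq_zero, ← hC]; noncomm_ring
  have : C * eigProj C = Complex.I • eigProj C := by
    simp only [eigProj, mul_smul_comm, mul_add, h3, smul_add, smul_smul]
    rw [mul_left_comm Complex.I, Complex.I_mul_I]
    module
  rw [mem_ker_iff, mulVec_mulVec, this, smul_mulVec]

lemma eigProj_of_mem {m : ℕ} (C : Matrix (Fin m) (Fin m) ℂ) (v : Fin m → ℂ)
    (hv : v ∈ LinearMap.ker (C.mulVecLin - Complex.I • LinearMap.id)) : eigProj C *ᵥ v = v := by
  rw [mem_ker_iff] at hv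
  rw [eigProj, smul_mulVec, add_mulVec, smul_mulVec, ← mulVec_mulVec, hv, mulVec_smul, hv,
    smul_smul, Complex.I_mul_I]
  module

lemma cx_cube {m : ℕ} {F : Matrix (Fin m) (Fin m) ℝ} (h : F ^ 3 + F = 0) :
    (F.map Complex.ofReal) ^ 3 + F.map Complex.ofReal = 0 := by
  have := congrArg (Complex.ofRealHom.mapMatrix) h
  rw [map_add, map_pow, map_zero] at this
  exact this

lemma eigProj_hermitian {m : ℕ} {F : Matrix (Fin m) (Fin m) ℝ} (h : Fᵀ = -F) :
    (eigProj (F.map Complex.ofReal))ᴴ = eigProj (F.map Complex.ofReal) := by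
  have hC : (F.map Complex.ofReal)ᴴ = -F.map Complex.ofReal := by
    ext i j
    have := congrFun (congrFun h i) j
    simp only [transpose_apply] at this
    simp [this]
  simp [eigProj, hC]

/-- The rank of an `f`-structure is twice the dimension of its `(+i)`-eigenspace. -/
lemma rank_eq {m : ℕ} {F : Matrix (Fin m) (Fin m) ℝ} (h : Fᵀ = -F) (h3 : F ^ 3 + F = 0) :
    F.rank = 2 * finrank ℂ (LinearMap.ker
      ((F.map (Complex.ofReal)).mulVecLin - Complex.I • LinearMap.id)) := by
  have e3 : F * F * F = -F := by
    rw [eq_neg_iff_add_eq_zero, ← h3]; noncomm_ring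
  have t1 : (-(F * F)).trace = (F.rank : ℝ) := by
    refine trace_eq_finrank_of_proj _ (LinearMap.range F.mulVecLin) (fun v => ?_) ?_
    · exact ⟨-(F *ᵥ v), by simp [mulVec_neg, neg_mulVec]⟩
    · rintro _ ⟨v, rfl⟩
      rw [mulVecLin_apply, mulVec_mulVec, neg_mul, e3, neg_neg]
  have t2 := trace_eq_finrank_of_proj _ _ (eigProj_mem _ (cx_cube h3))
    (eigProj_of_mem (F.map Complex.ofReal))
  have t0 : F.trace = 0 := by
    have := congrArg trace h
    rw [trace_transpose, trace_neg] at this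
    linarith
  have tc (A : Matrix (Fin m) (Fin m) ℝ) : (A.map Complex.ofReal).trace = (A.trace : ℂ) := by
    simp [trace]
  have hm : F.map Complex.ofReal * F.map Complex.ofReal = (F * F).map Complex.ofReal :=
    (Matrix.map_mul (f := Complex.ofRealHom)).symm
  rw [eigProj, hm, trace_smul, trace_add, trace_smul, tc, tc, t0] at t2
  rw [trace_neg] at t1
  have t1' : (F * F).trace = -(F.rank : ℝ) := by linarith
  rw [t1'] at t2
  simp only [smul_eq_mul, Complex.ofReal_zero, mul_zero, add_zero] at t2
  push_cast at t2
  have : (F.rank : ℂ) = ((2 * finrank ℂ (LinearMap.ker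
      ((F.map (Complex.ofReal)).mulVecLin - Complex.I • LinearMap.id)) : ℕ) : ℂ) := by
    push_cast
    rw [← t2]; ring
  exact_mod_cast this

lemma isotropic_ker {m : ℕ} {F : Matrix (Fin m) (Fin m) ℝ} (h : Fᵀ = -F) (v w : Fin m → ℂ)
    (hv : F.map Complex.ofReal *ᵥ v = Complex.I • v)
    (hw : F.map Complex.ofReal *ᵥ w = Complex.I • w) : v ⬝ᵥ w = 0 := by
  have hC : (F.map Complex.ofReal)ᵀ = -F.map Complex.ofReal := by
    rw [← transpose_map, h]; ext; simp
  have h1 : v ⬝ᵥ (F.map Complex.ofReal *ᵥ w) = -((F.map Complex.ofReal *ᵥ v) ⬝ᵥ w) := by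
    rw [dotProduct_mulVec, ← mulVec_transpose, hC, neg_mulVec, neg_dotProduct]
  rw [hv, hw, dotProduct_smul, smul_dotProduct, smul_eq_mul] at h1
  have h2 : (2 * Complex.I) * (v ⬝ᵥ w) = 0 := by linear_combination h1
  simpa using h2

/-- Every isotropic subspace is the `(+i)`-eigenspace of an `f`-structure. -/
lemma exists_fstructure {m : ℕ} (W : Submodule ℂ (Fin m → ℂ))
    (hW : ∀ v ∈ W, ∀ w ∈ W, v ⬝ᵥ w = 0) :
    ∃ F : Matrix (Fin m) (Fin m) ℝ, Fᵀ = -F ∧ F ^ 3 + F = 0 ∧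
      LinearMap.ker ((F.map (Complex.ofReal)).mulVecLin - Complex.I • LinearMap.id) = W := by
  obtain ⟨P, hP, hP1, hP2⟩ := exists_hermitian_proj W
  have hPP : P * P = P := Matrix.ext_of_mulVec_single fun i => by
    rw [← mulVec_mulVec, hP2 _ (hP1 _)]
  have hQQ : Pᵀ * Pᵀ = Pᵀ := by rw [← transpose_mul, hPP]
  have hQP : Pᵀ * P = 0 := by
    ext i j
    have := hW _ (hP1 (Pi.single i 1)) _ (hP1 (Pi.single j 1))
    simpa [mul_apply, dotProduct] using this
  have hPQ : P * Pᵀ = 0 := by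
    have h1 : Pᵀᴴ = Pᵀ := by
      ext i j
      exact congrFun (congrFun hP j) i
    have := congrArg conjTranspose hQP
    rwa [conjTranspose_mul, h1, hP, conjTranspose_zero] at this
  have hentry (i j : Fin m) : P j i = star (P i j) := by
    conv_lhs => rw [← hP]
    rfl
  let F : Matrix (Fin m) (Fin m) ℝ := Matrix.of fun i j => -2 * (P i j).im
  have hF : F.map Complex.ofReal = Complex.I • (P - Pᵀ) := by
    ext i j
    apply Complex.ext <;> simp [F, hentry i j]
    ring
  have inj : Function.Injective (fun A : Matrix (Fin m) (Fin m) ℝ => A.map Complex.ofReal) :=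
    Matrix.map_injective Complex.ofReal_injective
  refine ⟨F, ?_, ?_, ?_⟩
  · ext i j
    simp [F, hentry i j]
  · have hsq : (F.map Complex.ofReal) * (F.map Complex.ofReal) = -(P + Pᵀ) := by
      rw [hF, smul_mul_smul_comm, Complex.I_mul_I, sub_mul, mul_sub, mul_sub, hPP, hQQ, hPQ, hQP]
      module
    have hcube : (F.map Complex.ofReal) ^ 3 + F.map Complex.ofReal = 0 := by
      rw [pow_succ, pow_two, hsq, hF, mul_smul_comm, neg_mul, add_mul, mul_sub, mul_sub, hPP, hQQ,
        hPQ, hQP]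
      module
    apply inj
    change Complex.ofRealHom.mapMatrix (F ^ 3 + F) = Complex.ofRealHom.mapMatrix 0
    rw [map_add, map_pow, map_zero]
    exact hcube
  · ext v
    rw [mem_ker_iff, hF, smul_mulVec, sub_mulVec]
    constructor
    · intro h
      have h1 : P *ᵥ v - Pᵀ *ᵥ v = v := smul_right_injective _ Complex.I_ne_zero h
      have h2 : Pᵀ *ᵥ v = -(Pᵀ *ᵥ v) := by
        conv_lhs => rw [← h1]
        rw [mulVec_sub, mulVec_mulVec, mulVec_mulVec, hQP, hQQ, zero_mulVec, zero_sub]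
      rw [self_eq_neg.1 h2, sub_zero] at h1
      exact h1 ▸ hP1 v
    · intro hv
      have : Pᵀ *ᵥ v = 0 := by
        rw [← hP2 v hv, mulVec_mulVec, hQP, zero_mulVec]
      rw [this, hP2 v hv, sub_zero]

theorem stmt11 (m k : ℕ) (hkm : 2 * k ≤ m) :
    Set.BijOn
      (fun F : Matrix (Fin m) (Fin m) ℝ =>
        LinearMap.ker
          ((F.map (Complex.ofReal)).mulVecLin - Complex.I • LinearMap.id))
      {F : Matrix (Fin m) (Fin m) ℝ | Fᵀ = -F ∧ F ^ 3 + F = 0 ∧ F.rank = 2 * k}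
      {W : Submodule ℂ (Fin m → ℂ) |
        Module.finrank ℂ W = k ∧ ∀ v ∈ W, ∀ w ∈ W, ∑ i : Fin m, v i * w i = 0} := by
  refine ⟨?_, ?_, ?_⟩
  · rintro F ⟨h1, h3, hr⟩
    refine ⟨?_, fun v hv w hw => ?_⟩
    · have := rank_eq h1 h3
      dsimp only
      omega
    · exact isotropic_ker h1 v w ((mem_ker_iff _ _).1 hv) ((mem_ker_iff _ _).1 hw)
  · rintro F ⟨hF1, hF3, -⟩ G ⟨hG1, hG3, -⟩ hFG
    dsimp only at hFG
    have hP : eigProj (F.map Complex.ofReal) = eigProj (G.map Complex.ofReal) :=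
      hermitian_proj_unique (eigProj_hermitian hF1) (eigProj_mem _ (cx_cube hF3))
        (eigProj_of_mem _) (eigProj_hermitian hG1)
        (fun v => hFG ▸ eigProj_mem _ (cx_cube hG3) v)
        (fun v hv => eigProj_of_mem _ v (hFG ▸ hv))
    -- The imaginary part of `eigProj` is `-F / 2`.
    ext i j
    have := congrArg Complex.im (congrFun (congrFun hP i) j)
    simpa [eigProj, mul_apply] using this
  · rintro W ⟨hk, hW⟩
    obtain ⟨F, h1, h3, hF⟩ := exists_fstructure W hW
    refine ⟨F, ⟨h1, h3, ?_⟩, hF⟩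
    rw [rank_eq h1 h3, hF, hk]
end

section
/- Let φ : EuclideanSpace ℝ (Fin m) → EuclideanSpace ℂ (Fin n) be differentiable at x and pseudo horizontally weakly conformal at x, and set A := fderiv ℝ φ x. Then there exists an ℝ-linear map F : EuclideanSpace ℝ (Fin m) → EuclideanSpace ℝ (Fin m) such that: (i) F is skew-adjoint (⟪F u, w⟫ = -⟪u, F w⟫ for all u, w) and F ∘ F ∘ F + F = 0 (i.e. F is an f-structure); (ii) the rank of F equals 2*k, where k is the ℂ-dimension of the span in (Fin m → ℂ) of the vectors v^α := (i ↦ (A (e i)) α), α ∈ Fin n; and (iii) A intertwines F with multiplication by i: A (F u) = Complex.I • A u for all u, i.e. φ is f-holomorphic at x with respect to F and the complex structure of ℂ^n. -/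
/-!
The vectors `v^α` span a complex subspace `W ⊆ ℂ^m`, and the PHWC condition says exactly that `W` is
isotropic for the complex bilinear form `∑ i, v i * w i`. If `w_1, …, w_k` is a Hermitian-orthonormal
basis of `W`, then isotropy forces the real vectors `a_j = √2 Re w_j`, `b_j = √2 Im w_j` to be an
orthonormal family of `2k` vectors in `ℝ^m` (`orthonormal_re_im`). The `f`-structure is the rotation
`a_j ↦ b_j ↦ -a_j`, extended by zero to the orthogonal complement (`rotF`). Its complexification is
multiplication by `-i` on `W`; by skew-adjointness the pairing of `F u` with an element of `W` is `i`
times the pairing of `u` with it, and since the components of the differential are the pairings with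
the `v^α`, this is the intertwining property.
-/

open scoped InnerProductSpace
open Module

/-- The endomorphism `a_j ↦ b_j ↦ -a_j` (for orthonormal `a_j, b_j`), zero on the orthogonal
complement of all these vectors. -/
noncomputable def rotF {E : Type*} [NormedAddCommGroup E] [InnerProductSpace ℝ E] {k : ℕ}
    (a b : Fin k → E) : E →ₗ[ℝ] E :=
  ∑ j, ((innerₗ E (a j)).smulRight (b j) - (innerₗ E (b j)).smulRight (a j))

section rotF

variable {E : Type*} [NormedAddCommGroup E] [InnerProductSpace ℝ E] {k : ℕ} {a b : Fin k → E}

lemma rotF_apply (a b : Fin k → E) (u : E) :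
    rotF a b u = ∑ j, (⟪a j, u⟫_ℝ • b j - ⟪b j, u⟫_ℝ • a j) := by
  simp [rotF]

lemma rotF_skew (a b : Fin k → E) (u w : E) : ⟪rotF a b u, w⟫_ℝ = -⟪u, rotF a b w⟫_ℝ := by
  simp only [rotF_apply, sum_inner, inner_sum, ← Finset.sum_neg_distrib]
  refine Finset.sum_congr rfl fun j _ => ?_
  simp only [inner_sub_left, inner_sub_right, real_inner_smul_right, real_inner_comm]
  ring

lemma rotF_left (h : Orthonormal ℝ (Sum.elim a b)) (j : Fin k) : rotF a b (a j) = b j := by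
  rw [orthonormal_iff_ite] at h
  have h1 : ∀ i, ⟪a i, a j⟫_ℝ = if i = j then 1 else 0 := fun i => by
    simpa using h (.inl i) (.inl j)
  have h2 : ∀ i, ⟪b i, a j⟫_ℝ = 0 := fun i => by simpa using h (.inr i) (.inl j)
  simp [rotF_apply, h1, h2]

lemma rotF_right (h : Orthonormal ℝ (Sum.elim a b)) (j : Fin k) : rotF a b (b j) = -a j := by
  rw [orthonormal_iff_ite] at h
  have h1 : ∀ i, ⟪b i, b j⟫_ℝ = if i = j then 1 else 0 := fun i => by
    simpa using h (.inr i) (.inr j)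
  have h2 : ∀ i, ⟪a i, b j⟫_ℝ = 0 := fun i => by simpa using h (.inl i) (.inr j)
  simp [rotF_apply, h1, h2]

lemma rotF_cube (h : Orthonormal ℝ (Sum.elim a b)) (u : E) :
    rotF a b (rotF a b (rotF a b u)) + rotF a b u = 0 := by
  rw [rotF_apply a b u]
  simp only [map_sum, map_sub, map_smul, rotF_left h, rotF_right h, map_neg,
    ← Finset.sum_add_distrib]
  refine Finset.sum_eq_zero fun j _ => ?_
  module

lemma rotF_rank (h : Orthonormal ℝ (Sum.elim a b)) :
    Module.finrank ℝ (LinearMap.range (rotF a b)) = 2 * k := by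
  have hr : LinearMap.range (rotF a b) = Submodule.span ℝ (Set.range (Sum.elim a b)) := by
    apply le_antisymm
    · rintro _ ⟨u, rfl⟩
      rw [rotF_apply]
      refine Submodule.sum_mem _ fun j _ => Submodule.sub_mem _ ?_ ?_
      · exact Submodule.smul_mem _ _ (Submodule.subset_span ⟨.inr j, rfl⟩)
      · exact Submodule.smul_mem _ _ (Submodule.subset_span ⟨.inl j, rfl⟩)
    · rw [Submodule.span_le]
      rintro _ ⟨j | j, rfl⟩
      · exact ⟨-b j, by simp [rotF_right h]⟩
      · exact ⟨a j, rotF_left h j⟩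
  rw [hr, finrank_span_eq_card h.linearIndependent]
  simp [two_mul]

lemma rotF_inner_left (h : Orthonormal ℝ (Sum.elim a b)) (u : E) (j : Fin k) :
    ⟪rotF a b u, a j⟫_ℝ = -⟪u, b j⟫_ℝ := by
  rw [rotF_skew, rotF_left h]

lemma rotF_inner_right (h : Orthonormal ℝ (Sum.elim a b)) (u : E) (j : Fin k) :
    ⟪rotF a b u, b j⟫_ℝ = ⟪u, a j⟫_ℝ := by
  rw [rotF_skew, rotF_right h, inner_neg_right, neg_neg]

end rotF

/-- `√2 Re w`, as a vector of `ℝ^m`. -/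
noncomputable def reVec {m : ℕ} (w : Fin m → ℂ) : EuclideanSpace ℝ (Fin m) :=
  WithLp.toLp 2 fun i => √2 * (w i).re

/-- `√2 Im w`, as a vector of `ℝ^m`. -/
noncomputable def imVec {m : ℕ} (w : Fin m → ℂ) : EuclideanSpace ℝ (Fin m) :=
  WithLp.toLp 2 fun i => √2 * (w i).im

/-- With `w_j = (a_j + i b_j) / √2`, the real and imaginary parts of the Hermitian orthonormality
relations and of the isotropy relations determine all four real inner products. -/
lemma orthonormal_re_im {m k : ℕ} (w : Fin k → Fin m → ℂ)
    (hH : ∀ j l, ∑ i, w l i * starRingEnd ℂ (w j i) = if j = l then 1 else 0)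
    (hB : ∀ j l, ∑ i, w j i * w l i = 0) :
    Orthonormal ℝ (Sum.elim (fun j => reVec (w j)) (fun j => imVec (w j))) := by
  have hs : √2 * √2 = (2 : ℝ) := Real.mul_self_sqrt (by norm_num)
  have e : ∀ f g : Fin m → ℝ,
      ⟪(WithLp.toLp 2 fun i => √2 * f i : EuclideanSpace ℝ (Fin m)),
        WithLp.toLp 2 fun i => √2 * g i⟫_ℝ = 2 * ∑ i, f i * g i := by
    intro f g
    simp only [PiLp.inner_apply, Finset.mul_sum, RCLike.inner_apply, conj_trivial]
    refine Finset.sum_congr rfl fun i _ => ?_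
    linear_combination (f i * g i) * hs
  have key : ∀ j l,
      (∑ i, (w j i).re * (w l i).re = if j = l then 1 / 2 else 0) ∧
      (∑ i, (w j i).im * (w l i).im = if j = l then 1 / 2 else 0) ∧
      (∑ i, (w j i).re * (w l i).im = 0) ∧ (∑ i, (w j i).im * (w l i).re = 0) := by
    intro j l
    have h1 := congrArg Complex.re (hH j l)
    have h2 := congrArg Complex.im (hH j l)
    have h3 := congrArg Complex.re (hB j l)
    have h4 := congrArg Complex.im (hB j l)
    simp only [Complex.re_sum, Complex.im_sum, Complex.mul_re, Complex.mul_im, Complex.conj_re,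
      Complex.conj_im, Finset.sum_add_distrib, Finset.sum_sub_distrib, Complex.zero_re, Complex.zero_im,
      mul_comm (Complex.re (w l _)), mul_comm (Complex.im (w l _))] at h1 h2 h3 h4
    split_ifs at h1 h2 ⊢ <;> simp at h1 h2 <;> refine ⟨?_, ?_, ?_, ?_⟩ <;> linarith
  rw [orthonormal_iff_ite]
  rintro (j | j) (l | l) <;> obtain ⟨k1, k2, k3, k4⟩ := key j l <;>
    simp [reVec, imVec, e, k1, k2, k3, k4]

theorem stmt12 (m n : ℕ) (φ : EuclideanSpace ℝ (Fin m) → EuclideanSpace ℂ (Fin n))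
    (x : EuclideanSpace ℝ (Fin m)) (hφ : DifferentiableAt ℝ φ x) (hphwc : PHWCAt φ x) :
    ∃ F : EuclideanSpace ℝ (Fin m) →ₗ[ℝ] EuclideanSpace ℝ (Fin m),
      (∀ u w : EuclideanSpace ℝ (Fin m), ⟪F u, w⟫_ℝ = -⟪u, F w⟫_ℝ) ∧
      (∀ u : EuclideanSpace ℝ (Fin m), F (F (F u)) + F u = 0) ∧
      Module.finrank ℝ (LinearMap.range F) =
        2 * Module.finrank ℂ (Submodule.span ℂ
          (Set.range fun α : Fin n => fun i : Fin m => (fderiv ℝ φ x (stdBasis m i)) α)) ∧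
      (∀ u : EuclideanSpace ℝ (Fin m),
        fderiv ℝ φ x (F u) = Complex.I • fderiv ℝ φ x u) := by
  unfold PHWCAt at hphwc
  set A := fderiv ℝ φ x
  set v : Fin n → Fin m → ℂ := fun α i => A (stdBasis m i) α with hv
  set W := Submodule.span ℂ (Set.range v) with hW
  have hiso : ∀ p ∈ W, ∀ q ∈ W, p ⬝ᵥ q = 0 := by
    intro p hp q hq
    induction hp, hq using Submodule.span_induction₂ with
    | mem_mem p q hp hq =>
      obtain ⟨α, rfl⟩ := hp
      obtain ⟨β, rfl⟩ := hq
      exact hphwc α β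
    | zero_left => simp
    | zero_right => simp
    | add_left p q r _ _ _ h1 h2 => simp [add_dotProduct, h1, h2]
    | add_right p q r _ _ _ h1 h2 => simp [dotProduct_add, h1, h2]
    | smul_left c p q _ _ h => simp [h]
    | smul_right c p q _ _ h => simp [h]
  -- `W` is transported to `EuclideanSpace` to make a Hermitian-orthonormal basis available.
  let T := (WithLp.linearEquiv 2 ℂ (Fin m → ℂ)).symm
  let W' : Submodule ℂ (EuclideanSpace ℂ (Fin m)) := W.map T.toLinearMap
  have hrank : finrank ℂ W' = finrank ℂ W := LinearEquiv.finrank_map_eq T W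
  let ob := stdOrthonormalBasis ℂ W'
  let w : Fin (finrank ℂ W') → Fin m → ℂ := fun j => (ob j : EuclideanSpace ℂ (Fin m)).ofLp
  have hwW : ∀ j, w j ∈ W := by
    intro j
    obtain ⟨y, hy, hy'⟩ := (ob j).2
    have : w j = y := by
      simp only [w, ← hy']
      rfl
    exact this ▸ hy
  have hO : Orthonormal ℝ (Sum.elim (fun j => reVec (w j)) (fun j => imVec (w j))) := by
    refine orthonormal_re_im w (fun j l => ?_) fun j l => hiso _ (hwW j) _ (hwW l)
    have := orthonormal_iff_ite.1 ob.orthonormal j l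
    rw [Submodule.coe_inner, PiLp.inner_apply] at this
    simpa [w] using this
  have hspan : W ≤ Submodule.span ℂ (Set.range w) := by
    intro p hp
    have hsum := ob.sum_repr ⟨T p, Submodule.mem_map_of_mem hp⟩
    have h2 : p = ∑ j, ob.repr ⟨T p, Submodule.mem_map_of_mem hp⟩ j • w j := by
      have := congrArg (fun y : W' => T.symm (y : EuclideanSpace ℂ (Fin m))) hsum
      simp only [Submodule.coe_sum, Submodule.coe_smul, map_sum, map_smul,
        LinearEquiv.symm_apply_apply] at this
      exact this.symm
    rw [h2]
    exact Submodule.sum_mem _ fun j _ => Submodule.smul_mem _ _ (Submodule.subset_span ⟨j, rfl⟩)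
  let F := rotF (fun j => reVec (w j)) (fun j => imVec (w j))
  have hpair : ∀ (u : EuclideanSpace ℝ (Fin m)) (p : Fin m → ℂ),
      (√2 : ℂ) * ((fun i => (u i : ℂ)) ⬝ᵥ p) =
        (⟪u, reVec p⟫_ℝ : ℂ) + (⟪u, imVec p⟫_ℝ : ℂ) * Complex.I := by
    intro u p
    simp only [dotProduct, reVec, imVec, PiLp.inner_apply, RCLike.inner_apply, conj_trivial,
      Complex.ofReal_sum, Complex.ofReal_mul, Finset.mul_sum, Finset.sum_mul,
      ← Finset.sum_add_distrib]
    refine Finset.sum_congr rfl fun i _ => ?_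
    conv_lhs => rw [← Complex.re_add_im (p i)]
    ring
  have hs0 : (√2 : ℂ) ≠ 0 := by simp
  have hFw : ∀ u : EuclideanSpace ℝ (Fin m), ∀ p ∈ W,
      (fun i => (F u i : ℂ)) ⬝ᵥ p = Complex.I * ((fun i => (u i : ℂ)) ⬝ᵥ p) := by
    intro u p hp
    replace hp := hspan hp
    induction hp using Submodule.span_induction with
    | mem p hp =>
      obtain ⟨j, rfl⟩ := hp
      apply mul_left_cancel₀ hs0
      rw [mul_left_comm, hpair, hpair, rotF_inner_left hO, rotF_inner_right hO]
      push_cast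
      linear_combination -(⟪u, imVec (w j)⟫_ℝ : ℂ) * Complex.I_mul_I
    | zero => simp
    | add p q _ _ h1 h2 => simp only [dotProduct_add, h1, h2]; ring
    | smul c p _ h => simp only [dotProduct_smul, h, smul_eq_mul]; ring
  have hA : ∀ (u : EuclideanSpace ℝ (Fin m)) α, A u α = (fun i => (u i : ℂ)) ⬝ᵥ v α := by
    intro u α
    have hu : u = ∑ i, u i • stdBasis m i := by
      ext i
      simp [stdBasis, Finset.sum_apply, Pi.single_apply]
    conv_lhs => rw [hu]
    simp [dotProduct, hv]
  refine ⟨F, rotF_skew _ _, rotF_cube hO, ?_, fun u => ?_⟩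
  · rw [← hrank]
    exact rotF_rank hO
  · ext α
    rw [hA, hFw u _ (Submodule.subset_span ⟨α, rfl⟩), ← hA]
    simp
end

section
/- Let F : EuclideanSpace ℝ (Fin m) → EuclideanSpace ℝ (Fin m) be an ℝ-linear map that is skew-adjoint (⟪F u, w⟫ = -⟪u, F w⟫ for all u, w) and satisfies F ∘ F ∘ F + F = 0, and let φ : EuclideanSpace ℝ (Fin m) → EuclideanSpace ℂ (Fin n) be C² and f-holomorphic with respect to F, i.e. for every x and every u, fderiv ℝ φ x (F u) = Complex.I • (fderiv ℝ φ x u). Then φ is harmonic: for every x, ∑_{i ∈ Fin m} (the second derivative of φ at x evaluated at (e i, e i)) = 0, where (e i) is the standard orthonormal basis. -/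
/-!
Fix `x` and let `B` be the second derivative of `φ` at `x`, a symmetric real bilinear map.
Differentiating the f-holomorphy equation (`F` is constant) gives `B (w, F u) = I • B (w, u)`.
Hence `I • ∑ i, B (e i, e i) = ∑ i, B (e i, F (e i)) = ∑ i j, ⟪e j, F (e i)⟫ • B (e i, e j)`, the
contraction of a symmetric tensor with a skew one, which vanishes; as `I ≠ 0`, so does the
Laplacian.
-/

open scoped InnerProductSpace
open Module

/-- Contracting a symmetric bilinear map with a skew-adjoint endomorphism gives zero. -/
theorem sum_symm_skew_eq_zero {ι E V : Type*} [Fintype ι] [NormedAddCommGroup E]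
    [InnerProductSpace ℝ E] [AddCommGroup V] [Module ℝ V] (b : OrthonormalBasis ι ℝ E)
    (F : E →ₗ[ℝ] E) (hskew : ∀ u w : E, ⟪F u, w⟫_ℝ = -⟪u, F w⟫_ℝ)
    (B : E →ₗ[ℝ] E →ₗ[ℝ] V) (hB : ∀ u w, B u w = B w u) :
    ∑ i, B (b i) (F (b i)) = 0 := by
  have expand : ∑ i, B (b i) (F (b i)) = ∑ i, ∑ j, ⟪b j, F (b i)⟫_ℝ • B (b i) (b j) := by
    refine Finset.sum_congr rfl fun i _ => ?_
    conv_lhs => rw [← b.sum_repr' (F (b i))]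
    simp only [map_sum, map_smul]
  have neg : ∑ i, B (b i) (F (b i)) = -∑ i, B (b i) (F (b i)) := by
    conv_lhs => rw [expand, Finset.sum_comm]
    rw [expand, ← Finset.sum_neg_distrib]
    refine Finset.sum_congr rfl fun i _ => ?_
    rw [← Finset.sum_neg_distrib]
    refine Finset.sum_congr rfl fun j _ => ?_
    rw [hB (b j) (b i), ← neg_smul, ← hskew, real_inner_comm]
  have two : (2 : ℝ) • ∑ i, B (b i) (F (b i)) = 0 := by
    rw [two_smul]
    exact eq_neg_iff_add_eq_zero.mp neg
  exact (smul_eq_zero.mp two).resolve_left two_ne_zero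

theorem stmt13 (m n : ℕ) (F : EuclideanSpace ℝ (Fin m) →ₗ[ℝ] EuclideanSpace ℝ (Fin m))
    (hskew : ∀ u w : EuclideanSpace ℝ (Fin m), ⟪F u, w⟫_ℝ = -⟪u, F w⟫_ℝ)
    (hF3 : ∀ u : EuclideanSpace ℝ (Fin m), F (F (F u)) + F u = 0)
    (φ : EuclideanSpace ℝ (Fin m) → EuclideanSpace ℂ (Fin n))
    (hC2 : ContDiff ℝ 2 φ)
    (hol : ∀ (x : EuclideanSpace ℝ (Fin m)) (u : EuclideanSpace ℝ (Fin m)),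
      fderiv ℝ φ x (F u) = Complex.I • fderiv ℝ φ x u) :
    ∀ x : EuclideanSpace ℝ (Fin m),
      ∑ i : Fin m, iteratedFDeriv ℝ 2 φ x ![stdBasis m i, stdBasis m i] = 0 := by
  intro x
  have hd : DifferentiableAt ℝ (fderiv ℝ φ) x :=
    ((hC2.fderiv_right (m := 1) (by norm_num)).differentiable (by norm_num)) x
  have hsymm : IsSymmSndFDerivAt ℝ φ x := hC2.contDiffAt.isSymmSndFDerivAt (by simp)
  have hI : ∀ w u, fderiv ℝ (fderiv ℝ φ) x w (F u)
      = Complex.I • fderiv ℝ (fderiv ℝ φ) x w u := by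
    intro w u
    have h1 := hd.hasFDerivAt.clm_apply (hasFDerivAt_const (F u) x)
    have h2 := (hd.hasFDerivAt.clm_apply (hasFDerivAt_const u x)).const_smul Complex.I
    have h3 : (fun y => fderiv ℝ φ y (F u)) = Complex.I • fun y => fderiv ℝ φ y u :=
      funext fun y => hol y u
    rw [h3] at h1
    simpa using congrArg (fun L => L w) (h1.unique h2)
  have key := sum_symm_skew_eq_zero (EuclideanSpace.basisFun (Fin m) ℝ) F hskew
    ((ContinuousLinearMap.coeLM ℝ).comp (fderiv ℝ (fderiv ℝ φ) x).toLinearMap)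
    (fun u w => hsymm u w)
  simp only [LinearMap.comp_apply, ContinuousLinearMap.coe_coe, ContinuousLinearMap.coeLM_apply,
    hI, EuclideanSpace.basisFun_apply, ← Finset.smul_sum] at key
  simpa [iteratedFDeriv_two_apply, stdBasis] using
    (smul_eq_zero.mp key).resolve_left Complex.I_ne_zero
end
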